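/- arXiv:2201.09719 — 5 statements merged into one kernel-verified Lean document; each statement's English description precedes it below -/
import Mathlib

section
/- Let L0, L1, L2, L3 be Lagrangian subspaces of a finite-dimensional real symplectic vector space (Σ, σ). Then the alternating sum of negative Maslov indices satisfies: −i(L1,L2,L3) + i(L0,L2,L3) − i(L0,L1,L3) + i(L0,L1,L2) = dim(L1 ∩ L3) − dim(L0 ∩ L2) − dim(L1 ∩ L2 ∩ L3) + dim(L0 ∩ L2 ∩ L3) − dim(L0 ∩ L1 ∩ L3) + dim(L0 ∩ L1 ∩ L2). -/
/-- The symplectic (skew) orthogonal of a subspace `W` with respect to a bilinear form `σ`: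
`W^⊥ = {u : σ u w = 0 for all w ∈ W}`. -/
def sympOrth {E : Type*} [AddCommGroup E] [Module ℝ E]
    (σ : LinearMap.BilinForm ℝ E) (W : Submodule ℝ E) : Submodule ℝ E where
  carrier := {u | ∀ w ∈ W, σ u w = 0}
  add_mem' := by
    intro a b ha hb w hw
    simp [map_add, ha w hw, hb w hw]
  zero_mem' := by
    intro w hw
    simp
  smul_mem' := by
    intro c u hu w hw
    simp [hu w hw]

/-- A subspace is Lagrangian when it coincides with its symplectic orthogonal. -/
def IsLagrangian {E : Type*} [AddCommGroup E] [Module ℝ E]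
    (σ : LinearMap.BilinForm ℝ E) (L : Submodule ℝ E) : Prop :=
  L = sympOrth σ L

/-- The negative Maslov index `i(L0, L1, L2)` of a triple of Lagrangian subspaces:
the negative inertia index of the Maslov form `m(l1) = σ(l0, l2)` (with `l1 = l0 + l2`,
`l0 ∈ L0`, `l2 ∈ L2`) defined on `L1 ∩ (L0 + L2)`, i.e. the supremum of dimensions of
subspaces on which the Maslov form is negative definite. -/
noncomputable def maslovIndex {E : Type*} [AddCommGroup E] [Module ℝ E]
    (σ : LinearMap.BilinForm ℝ E) (L0 L1 L2 : Submodule ℝ E) : ℕ :=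
  sSup {d : ℕ | ∃ W : Submodule ℝ E, W ≤ L1 ⊓ (L0 ⊔ L2) ∧
    (∀ v ∈ W, v ≠ 0 → ∀ l0 ∈ L0, ∀ l2 ∈ L2, v = l0 + l2 → σ l0 l2 < 0) ∧
    Module.finrank ℝ ↥W = d}

/-!
A point of `L1 ∩ (L0 + L2)` together with a decomposition is a closed triangle with edges in `L0`,
`L1`, `L2`, and the Maslov form is minus twice its symplectic area. Closed quadrilaterals with edges
in `L0`, `L1`, `L2`, `L3` have a symplectic area too, and neither area changes when the edges are
relabelled cyclically.

Let `I ≅ L0 ∩ L2` be the space of flat quadrilaterals `c, 0, -c, 0`. It is isotropic for the area,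
and its orthogonal consists of the sums of a triangle on `L0, L1, L2` and a triangle on
`L0, L2, L3`, on which the area is additive. As `I` meets the radical in
`L0 ∩ L1 ∩ L2 + L0 ∩ L2 ∩ L3`, passing from the quadrilaterals to `I^⊥` expresses the negative index
of the quadrilateral area as `i(L0,L1,L2) + i(L0,L2,L3)` plus dimensions of intersections.
Relabelling the edges cyclically gives a second expression, with `i(L1,L2,L3) + i(L0,L1,L3)`, and
the theorem equates the two.
-/

section IsotropicSubspace

open QuadraticMap

variable {R M : Type*} [CommRing R] [AddCommGroup M] [Module R M] {Q : QuadraticForm R M}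
  {I : Submodule R M}

theorem isotropic_sup_radical_le_orthogonal (hI : ∀ x ∈ I, Q x = 0) :
    I ⊔ Q.radical ≤ LinearMap.BilinForm.orthogonal Q.polarBilin I := by
  refine sup_le (fun x hx y hy => ?_) fun x hx y _ => ?_
  · simp [polar, hI x hx, hI y hy, hI _ (I.add_mem hy hx)]
  · simp [polar, add_comm y, mem_radical_iff'.1 hx]

theorem isotropic_sup_radical_le_map_radical_restrict (hI : ∀ x ∈ I, Q x = 0) :
    I ⊔ Q.radical ≤ (Q.restrict (LinearMap.BilinForm.orthogonal Q.polarBilin I)).radical.map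
      (Submodule.subtype _) := by
  have horth := isotropic_sup_radical_le_orthogonal hI
  refine sup_le (fun x hx => ?_) fun x hx => ?_
  · refine ⟨⟨x, horth (Submodule.mem_sup_left hx)⟩, mem_radical_iff'.2 ⟨hI x hx, fun y => ?_⟩, rfl⟩
    have hxy : polar Q x y = 0 := y.2 x hx
    simpa [polar, hI x hx, sub_eq_zero] using hxy
  · have hQx := mem_radical_iff'.1 hx
    exact ⟨⟨x, horth (Submodule.mem_sup_right hx)⟩,
      mem_radical_iff'.2 ⟨hQx.1, fun y => hQx.2 y⟩, rfl⟩

end IsotropicSubspace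

section Signature

open Module QuadraticMap

variable {𝕜 M M' : Type*} [Field 𝕜] [AddCommGroup M] [Module 𝕜 M] [AddCommGroup M'] [Module 𝕜 M']

theorem finrank_radical_add_le_finrank_radical_prod [FiniteDimensional 𝕜 M]
    [FiniteDimensional 𝕜 M'] (Q : QuadraticForm 𝕜 M) (Q' : QuadraticForm 𝕜 M') :
    finrank 𝕜 Q.radical + finrank 𝕜 Q'.radical ≤ finrank 𝕜 (Q.prod Q').radical := by
  have hmem (x : Q.radical × Q'.radical) :
      Q.radical.subtype.prodMap Q'.radical.subtype x ∈ (Q.prod Q').radical := by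
    have hx := mem_radical_iff'.1 x.1.2
    have hx' := mem_radical_iff'.1 x.2.2
    exact mem_radical_iff'.2 ⟨by simp [hx.1, hx'.1], fun y => by simp [hx.2, hx'.2]⟩
  rw [← finrank_prod]
  refine LinearMap.finrank_le_finrank_of_injective (f := LinearMap.codRestrict _ _ hmem) ?_
  exact (LinearMap.injective_codRestrict_iff _).2
    (Q.radical.injective_subtype.prodMap Q'.radical.injective_subtype)

variable [LinearOrder 𝕜]

theorem injective_of_posDef_comp {Q : QuadraticForm 𝕜 M} {f : M' →ₗ[𝕜] M}
    (h : (Q.comp f).PosDef) : Function.Injective f := by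
  refine (injective_iff_map_eq_zero f).2 fun x hx => h.anisotropic x ?_
  rw [comp_apply, hx, map_zero]

theorem finrank_le_sigPos_of_posDef_comp [FiniteDimensional 𝕜 M] {Q : QuadraticForm 𝕜 M}
    {f : M' →ₗ[𝕜] M} (h : (Q.comp f).PosDef) : finrank 𝕜 M' ≤ sigPos Q := by
  rw [← LinearMap.finrank_range_of_inj (injective_of_posDef_comp h)]
  apply le_sigPos_of_posDef
  rintro ⟨_, x, rfl⟩ hx
  exact h x fun h0 => hx (by simp [h0])

theorem sigPos_add_finrank_le [FiniteDimensional 𝕜 M] (Q : QuadraticForm 𝕜 M)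
    (S : Submodule 𝕜 M) : sigPos Q + finrank 𝕜 S ≤ sigPos (Q.restrict S) + finrank 𝕜 M := by
  obtain ⟨V, hVdim, hV⟩ := exists_finrank_eq_sigPos_and_posDef Q
  have hVS : finrank 𝕜 ↥(V ⊓ S) ≤ sigPos (Q.restrict S) :=
    finrank_le_sigPos_of_posDef_comp (f := Submodule.inclusion inf_le_right) fun x hx =>
      hV ⟨x, x.2.1⟩ (by simpa using hx)
  have hsup := Submodule.finrank_sup_add_finrank_inf_eq V S
  have hle := (V ⊔ S).finrank_le
  lia

theorem sigNeg_add_finrank_le [FiniteDimensional 𝕜 M] (Q : QuadraticForm 𝕜 M)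
    (S : Submodule 𝕜 M) : sigNeg Q + finrank 𝕜 S ≤ sigNeg (Q.restrict S) + finrank 𝕜 M :=
  sigPos_add_finrank_le (-Q) S

theorem sigNeg_comp_le [FiniteDimensional 𝕜 M] [FiniteDimensional 𝕜 M'] (Q : QuadraticForm 𝕜 M)
    (f : M' →ₗ[𝕜] M) : sigNeg (Q.comp f) ≤ sigNeg Q := by
  obtain ⟨V, hVdim, hV⟩ := exists_finrank_eq_sigNeg_and_negDef (Q.comp f)
  rw [← hVdim]
  exact finrank_le_sigPos_of_posDef_comp (Q := -Q) (f := f ∘ₗ V.subtype) hV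

theorem sigNeg_comp_of_surjective [FiniteDimensional 𝕜 M] [FiniteDimensional 𝕜 M']
    (Q : QuadraticForm 𝕜 M) {f : M' →ₗ[𝕜] M} (hf : Function.Surjective f) :
    sigNeg (Q.comp f) = sigNeg Q := by
  obtain ⟨g, hg⟩ := f.exists_rightInverse_of_surjective (LinearMap.range_eq_top.2 hf)
  have hcomp : Q = (Q.comp f).comp g := QuadraticMap.ext fun x =>
    congrArg Q (LinearMap.congr_fun hg x).symm
  refine (sigNeg_comp_le Q f).antisymm ?_
  calc sigNeg Q = sigNeg ((Q.comp f).comp g) := congrArg sigNeg hcomp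
    _ ≤ sigNeg (Q.comp f) := sigNeg_comp_le _ g

theorem sigNeg_restrict_range [FiniteDimensional 𝕜 M'] (Q : QuadraticForm 𝕜 M)
    (f : M' →ₗ[𝕜] M) : sigNeg (Q.restrict (LinearMap.range f)) = sigNeg (Q.comp f) :=
  (sigNeg_comp_of_surjective _ f.surjective_rangeRestrict).symm

variable [IsStrictOrderedRing 𝕜] [FiniteDimensional 𝕜 M]

theorem sigPos_add_sigPos_le_sigPos_prod [FiniteDimensional 𝕜 M'] (Q : QuadraticForm 𝕜 M)
    (Q' : QuadraticForm 𝕜 M') : sigPos Q + sigPos Q' ≤ sigPos (Q.prod Q') := by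
  obtain ⟨V, hVdim, hV⟩ := exists_finrank_eq_sigPos_and_posDef Q
  obtain ⟨V', hVdim', hV'⟩ := exists_finrank_eq_sigPos_and_posDef Q'
  rw [← hVdim, ← hVdim', ← finrank_prod]
  exact finrank_le_sigPos_of_posDef_comp (f := V.subtype.prodMap V'.subtype) (hV.prod hV')

theorem sigNeg_add_sigNeg_le_sigNeg_prod [FiniteDimensional 𝕜 M'] (Q : QuadraticForm 𝕜 M)
    (Q' : QuadraticForm 𝕜 M') : sigNeg Q + sigNeg Q' ≤ sigNeg (Q.prod Q') := by
  have hneg : -(Q.prod Q') = (-Q).prod (-Q') := by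
    ext x
    simp [add_comm]
  simpa only [← sigPos_neg, hneg] using sigPos_add_sigPos_le_sigPos_prod (-Q) (-Q')

theorem sigNeg_prod [FiniteDimensional 𝕜 M'] (Q : QuadraticForm 𝕜 M) (Q' : QuadraticForm 𝕜 M') :
    sigNeg (Q.prod Q') = sigNeg Q + sigNeg Q' := by
  have hpos := sigPos_add_sigPos_le_sigPos_prod Q Q'
  have hneg := sigNeg_add_sigNeg_le_sigNeg_prod Q Q'
  have hrad := finrank_radical_add_le_finrank_radical_prod Q Q'
  have hQ := QuadraticForm.sigPos_add_sigNeg_add_radical (Q := Q)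
  have hQ' := QuadraticForm.sigPos_add_sigNeg_add_radical (Q := Q')
  have hprod := QuadraticForm.sigPos_add_sigNeg_add_radical (Q := Q.prod Q')
  rw [finrank_prod] at hprod
  lia

-- `≤` holds for `sigPos` as well, and comparing `sigPos + sigNeg + dim radical = dim` for the two
-- forms leaves no room for either inequality to be strict.
theorem sigNeg_add_finrank_isotropic_inf_radical {Q : QuadraticForm 𝕜 M} {I : Submodule 𝕜 M}
    (hI : ∀ x ∈ I, Q x = 0) :
    sigNeg Q + finrank 𝕜 ↥(I ⊓ Q.radical) =
      sigNeg (Q.restrict (LinearMap.BilinForm.orthogonal Q.polarBilin I)) + finrank 𝕜 I := by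
  set S := LinearMap.BilinForm.orthogonal Q.polarBilin I
  have : Invertible (2 : 𝕜) := invertibleOfNonzero two_ne_zero
  have horth : finrank 𝕜 I + finrank 𝕜 S = finrank 𝕜 M + finrank 𝕜 ↥(I ⊓ Q.radical) := by
    rw [radical_eq_ker_polarBilin]
    exact LinearMap.BilinForm.finrank_add_finrank_orthogonal' I
  have hrad : finrank 𝕜 I + finrank 𝕜 Q.radical ≤
      finrank 𝕜 (Q.restrict S).radical + finrank 𝕜 ↥(I ⊓ Q.radical) := by
    rw [← Submodule.finrank_sup_add_finrank_inf_eq, ← Submodule.finrank_map_subtype_eq]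
    gcongr
    exact Submodule.finrank_mono (isotropic_sup_radical_le_map_radical_restrict hI)
  have hpos := sigPos_add_finrank_le Q S
  have hneg := sigNeg_add_finrank_le Q S
  have hQ := QuadraticForm.sigPos_add_sigNeg_add_radical (Q := Q)
  have hS := QuadraticForm.sigPos_add_sigNeg_add_radical (Q := Q.restrict S)
  lia

end Signature

section Orthogonal

open LinearMap.BilinForm

theorem orthogonal_sup_eq_inf {R M : Type*} [CommRing R] [AddCommGroup M] [Module R M]
    (B : LinearMap.BilinForm R M) (S T : Submodule R M) :
    B.orthogonal (S ⊔ T) = B.orthogonal S ⊓ B.orthogonal T := by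
  refine le_antisymm (le_inf (orthogonal_le le_sup_left) (orthogonal_le le_sup_right)) ?_
  rintro x ⟨hS, hT⟩ y hy
  obtain ⟨s, hs, t, ht, rfl⟩ := Submodule.mem_sup.1 hy
  have hsx : B s x = 0 := hS s hs
  have htx : B t x = 0 := hT t ht
  simp [hsx, htx]

theorem orthogonal_inf_eq_sup {K V : Type*} [Field K] [AddCommGroup V] [Module K V]
    [FiniteDimensional K V] {B : LinearMap.BilinForm K V} (hnd : B.Nondegenerate) (hB : B.IsRefl)
    (S T : Submodule K V) : B.orthogonal (S ⊓ T) = B.orthogonal S ⊔ B.orthogonal T := by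
  rw [← orthogonal_orthogonal hnd hB (B.orthogonal S ⊔ B.orthogonal T),
    orthogonal_sup_eq_inf, orthogonal_orthogonal hnd hB, orthogonal_orthogonal hnd hB]

theorem IsLagrangian.orthogonal_eq {E : Type*} [AddCommGroup E] [Module ℝ E]
    {σ : LinearMap.BilinForm ℝ E} {L : Submodule ℝ E} (hL : IsLagrangian σ L) (hσ : σ.IsAlt) :
    σ.orthogonal L = L := by
  conv_rhs => rw [hL]
  ext x
  exact forall₂_congr fun y _ => hσ.eq_iff

end Orthogonal

section Polygon

open LinearMap

variable {R E : Type*} [CommRing R] [AddCommGroup E] [Module R E]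

/-- Closed triangles with edges `a ∈ A`, `b ∈ B` and `-(a + b) ∈ C`, recorded by their first two
edges. -/
def triangleSpace (A B C : Submodule R E) : Submodule R (E × E) :=
  A.prod B ⊓ C.comap (fst R E E + snd R E E)

/-- Closed quadrilaterals with edges `a ∈ A`, `b ∈ B`, `c ∈ C` and `-(a + b + c) ∈ D`, recorded by
their first three edges. -/
def quadrilateralSpace (A B C D : Submodule R E) : Submodule R (E × E × E) :=
  A.prod (B.prod C) ⊓
    D.comap (fst R E (E × E) + fst R E E ∘ₗ snd R E (E × E) + snd R E E ∘ₗ snd R E (E × E))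

/-- Minus twice the symplectic area of a triangle; the sign makes it agree with the Maslov form
evaluated at the edge in `B`. -/
def triangleForm (σ : LinearMap.BilinForm R E) (A B C : Submodule R E) :
    QuadraticForm R (triangleSpace A B C) :=
  (BilinMap.toQuadraticMap (σ.compl₁₂ (snd R E E) (fst R E E))).restrict _

/-- Minus twice the symplectic area of a quadrilateral. -/
def quadrilateralForm (σ : LinearMap.BilinForm R E) (A B C D : Submodule R E) :
    QuadraticForm R (quadrilateralSpace A B C D) :=
  let a := fst R E (E × E)
  let b := fst R E E ∘ₗ snd R E (E × E)
  let c := snd R E E ∘ₗ snd R E (E × E)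
  (BilinMap.toQuadraticMap (σ.compl₁₂ b a + σ.compl₁₂ c (a + b))).restrict _

variable {A B C D : Submodule R E} {σ : LinearMap.BilinForm R E}

theorem mem_triangleSpace {x : E × E} :
    x ∈ triangleSpace A B C ↔ x.1 ∈ A ∧ x.2 ∈ B ∧ x.1 + x.2 ∈ C :=
  and_assoc

theorem mem_quadrilateralSpace {x : E × E × E} :
    x ∈ quadrilateralSpace A B C D ↔
      x.1 ∈ A ∧ x.2.1 ∈ B ∧ x.2.2 ∈ C ∧ x.1 + x.2.1 + x.2.2 ∈ D := by
  simp [quadrilateralSpace, and_assoc]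

theorem triangleForm_apply (σ : LinearMap.BilinForm R E) (x : triangleSpace A B C) :
    triangleForm σ A B C x = σ x.1.2 x.1.1 := rfl

theorem quadrilateralForm_apply (σ : LinearMap.BilinForm R E) (x : quadrilateralSpace A B C D) :
    quadrilateralForm σ A B C D x = σ x.1.2.1 x.1.1 + σ x.1.2.2 (x.1.1 + x.1.2.1) := rfl

/-- Cyclic relabelling of the edges of a triangle. -/
def rotateTriangle (A B C : Submodule R E) : triangleSpace A B C →ₗ[R] triangleSpace B C A where
  toFun x := ⟨(x.1.2, -(x.1.1 + x.1.2)), by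
    obtain ⟨ha, hb, hc⟩ := mem_triangleSpace.1 x.2
    exact mem_triangleSpace.2 ⟨hb, C.neg_mem hc, by simpa using ha⟩⟩
  map_add' x y := by
    ext <;> simp; abel
  map_smul' r x := by
    ext <;> simp

/-- Cyclic relabelling of the edges of a quadrilateral. -/
def rotateQuadrilateral (A B C D : Submodule R E) :
    quadrilateralSpace A B C D →ₗ[R] quadrilateralSpace B C D A where
  toFun x := ⟨(x.1.2.1, x.1.2.2, -(x.1.1 + x.1.2.1 + x.1.2.2)), by
    obtain ⟨ha, hb, hc, hd⟩ := mem_quadrilateralSpace.1 x.2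
    refine mem_quadrilateralSpace.2 ⟨hb, hc, D.neg_mem hd, ?_⟩
    convert A.neg_mem ha using 1
    dsimp only
    abel⟩
  map_add' x y := by
    ext <;> simp; abel
  map_smul' r x := by
    ext <;> simp

/-- The quadrilateral obtained from a triangle with edges in `A`, `B`, `C` and a triangle with edges
in `A`, `C`, `D` by adding up edges that lie in the same subspace. -/
def glueTriangles (A B C D : Submodule R E) :
    triangleSpace A B C × triangleSpace A C D →ₗ[R] quadrilateralSpace A B C D where
  toFun x := ⟨(x.1.1.1 + x.2.1.1, x.1.1.2, x.2.1.2 - (x.1.1.1 + x.1.1.2)), by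
    obtain ⟨ha, hb, hab⟩ := mem_triangleSpace.1 x.1.2
    obtain ⟨ha', hc', hac'⟩ := mem_triangleSpace.1 x.2.2
    refine mem_quadrilateralSpace.2 ⟨A.add_mem ha ha', hb, C.sub_mem hc' hab, ?_⟩
    convert hac' using 1
    dsimp only
    abel⟩
  map_add' x y := by
    ext <;> simp <;> abel
  map_smul' r x := by
    ext <;> simp [smul_sub]

/-- The flat quadrilaterals which run along `c ∈ A ∩ C` and straight back. -/
def flatQuadrilateral (A B C D : Submodule R E) : ↥(A ⊓ C) →ₗ[R] quadrilateralSpace A B C D where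
  toFun c := ⟨(c, 0, -c), mem_quadrilateralSpace.2 ⟨c.2.1, B.zero_mem, C.neg_mem c.2.2, by simp⟩⟩
  map_add' x y := by
    ext <;> simp; abel
  map_smul' r x := by
    ext <;> simp

theorem flatQuadrilateral_injective : Function.Injective (flatQuadrilateral A B C D) :=
  fun _ _ h => Subtype.ext (congrArg (fun x => x.1.1) h)

theorem triangleForm_comp_rotateTriangle (hσ : σ.IsAlt) :
    (triangleForm σ B C A).comp (rotateTriangle A B C) = triangleForm σ A B C := by
  ext x
  simp [triangleForm_apply, rotateTriangle, hσ.self_eq_zero, hσ.neg_eq]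

theorem quadrilateralForm_comp_rotateQuadrilateral (hσ : σ.IsAlt) :
    (quadrilateralForm σ B C D A).comp (rotateQuadrilateral A B C D) =
      quadrilateralForm σ A B C D := by
  ext ⟨⟨a, b, c⟩, hx⟩
  change σ c b + σ (-(a + b + c)) (b + c) = σ b a + σ c (a + b)
  simp only [map_add, map_neg, LinearMap.add_apply, LinearMap.neg_apply, hσ.self_eq_zero]
  linear_combination hσ.neg_eq a b + hσ.neg_eq a c + hσ.neg_eq b c

theorem quadrilateralForm_comp_glueTriangles (hσ : σ.IsAlt) (hA : A ≤ σ.orthogonal A)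
    (hC : C ≤ σ.orthogonal C) :
    (quadrilateralForm σ A B C D).comp (glueTriangles A B C D) =
      (triangleForm σ A B C).prod (triangleForm σ A C D) := by
  ext ⟨⟨⟨a, b⟩, hab⟩, ⟨⟨a', c⟩, hac⟩⟩
  rw [mem_triangleSpace] at hab hac
  have haa' : σ a a' = 0 := hA hac.1 a hab.1
  have hcab : σ c (a + b) = 0 := hC hab.2.2 c hac.2.1
  change σ b (a + a') + σ (c - (a + b)) (a + a' + b) = σ b a + σ c a'
  simp only [map_add, map_sub, LinearMap.add_apply, LinearMap.sub_apply, hσ.self_eq_zero] at hcab ⊢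
  linear_combination hcab - haa' + hσ.neg_eq a b

theorem quadrilateralForm_flatQuadrilateral (hσ : σ.IsAlt) (c : ↥(A ⊓ C)) :
    quadrilateralForm σ A B C D (flatQuadrilateral A B C D c) = 0 := by
  simp [quadrilateralForm_apply, flatQuadrilateral, hσ.self_eq_zero]

theorem polar_quadrilateralForm_flatQuadrilateral (hσ : σ.IsAlt) (hA : A ≤ σ.orthogonal A)
    (hC : C ≤ σ.orthogonal C) (c : ↥(A ⊓ C)) (x : quadrilateralSpace A B C D) :
    QuadraticMap.polar (quadrilateralForm σ A B C D) (flatQuadrilateral A B C D c) x =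
      -2 * σ c x.1.2.1 := by
  obtain ⟨ha, -, hc, -⟩ := mem_quadrilateralSpace.1 x.2
  have hca : σ c x.1.1 = 0 := hA ha c c.2.1
  have hcc : σ x.1.2.2 c = 0 := hC c.2.2 _ hc
  rw [QuadraticMap.polar, quadrilateralForm_flatQuadrilateral hσ]
  obtain ⟨⟨a, b, d⟩, hx⟩ := x
  change σ (0 + b) (c + a) + σ (-c + d) (c + a + (0 + b)) - 0 - (σ b a + σ d (a + b)) =
    -2 * σ c b
  simp only [map_add, map_neg, LinearMap.add_apply, LinearMap.neg_apply, zero_add,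
    hσ.self_eq_zero] at hca hcc ⊢
  linear_combination hcc - hca - hσ.neg_eq c b

theorem mem_range_glueTriangles {x : quadrilateralSpace A B C D} :
    x ∈ range (glueTriangles A B C D) ↔ x.1.2.1 ∈ A ⊔ C := by
  obtain ⟨⟨x₀, x₁, x₂⟩, hx⟩ := x
  obtain ⟨hx₀, hx₁, hx₂, hx₃⟩ := mem_quadrilateralSpace.1 hx
  rw [Submodule.mem_sup]
  constructor
  · rintro ⟨⟨⟨⟨a, b⟩, hab⟩, ⟨⟨a', c⟩, hac⟩⟩, h⟩
    obtain ⟨ha, -, hab⟩ := mem_triangleSpace.1 hab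
    obtain ⟨-, rfl, -⟩ : a + a' = x₀ ∧ b = x₁ ∧ c - (a + b) = x₂ := by
      simpa [glueTriangles] using h
    exact ⟨-a, A.neg_mem ha, a + b, hab, by simp⟩
  · rintro ⟨a, ha, c, hc, hac⟩
    obtain rfl : a + c = x₁ := hac
    refine ⟨(⟨(-a, a + c), ?_⟩, ⟨(x₀ + a, x₂ + c), ?_⟩), ?_⟩
    · exact mem_triangleSpace.2 ⟨A.neg_mem ha, hx₁, by simpa using hc⟩
    · refine mem_triangleSpace.2 ⟨A.add_mem hx₀ ha, C.add_mem hx₂ hc, ?_⟩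
      convert hx₃ using 1
      dsimp only
      abel
    · ext <;> simp [glueTriangles]

theorem exists_quadrilateralSpace_edge_eq_iff {b : E} :
    (∃ x : quadrilateralSpace A B C D, x.1.2.1 = b) ↔ b ∈ B ⊓ (A ⊔ C ⊔ D) := by
  constructor
  · rintro ⟨x, rfl⟩
    obtain ⟨ha, hb, hc, hd⟩ := mem_quadrilateralSpace.1 x.2
    have hsum : x.1.2.1 = -x.1.1 + -x.1.2.2 + (x.1.1 + x.1.2.1 + x.1.2.2) := by abel
    exact ⟨hb, hsum ▸ Submodule.add_mem_sup
      (Submodule.add_mem_sup (A.neg_mem ha) (C.neg_mem hc)) hd⟩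
  · rintro ⟨hb, hacd⟩
    obtain ⟨_, hac, d, hd, rfl⟩ := Submodule.mem_sup.1 hacd
    obtain ⟨a, ha, c, hc, rfl⟩ := Submodule.mem_sup.1 hac
    refine ⟨⟨(-a, a + c + d, -c), mem_quadrilateralSpace.2
      ⟨A.neg_mem ha, hb, C.neg_mem hc, ?_⟩⟩, rfl⟩
    convert hd using 1
    dsimp only
    abel

end Polygon

section FlatQuadrilateral

open Module QuadraticMap

variable {K E : Type*} [Field K] [NeZero (2 : K)] [AddCommGroup E] [Module K E]
  {σ : LinearMap.BilinForm K E} {A B C D : Submodule K E}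

theorem polar_quadrilateralForm_flatQuadrilateral_eq_zero_iff (hσ : σ.IsAlt)
    (hA : A ≤ σ.orthogonal A) (hC : C ≤ σ.orthogonal C) (c : ↥(A ⊓ C))
    (x : quadrilateralSpace A B C D) :
    polar (quadrilateralForm σ A B C D) (flatQuadrilateral A B C D c) x = 0 ↔
      σ c x.1.2.1 = 0 := by
  rw [polar_quadrilateralForm_flatQuadrilateral hσ hA hC,
    mul_eq_zero_iff_left (neg_ne_zero.2 two_ne_zero)]

theorem flatQuadrilateral_mem_radical_iff (hσ : σ.IsAlt) (hA : A ≤ σ.orthogonal A)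
    (hC : C ≤ σ.orthogonal C) (c : ↥(A ⊓ C)) :
    flatQuadrilateral A B C D c ∈ (quadrilateralForm σ A B C D).radical ↔
      (c : E) ∈ σ.orthogonal (B ⊓ (A ⊔ C ⊔ D)) := by
  have : Invertible (2 : K) := invertibleOfNonzero two_ne_zero
  have hpolar : flatQuadrilateral A B C D c ∈ (quadrilateralForm σ A B C D).radical ↔
      ∀ x : quadrilateralSpace A B C D, σ c x.1.2.1 = 0 := by
    rw [radical_eq_ker_polarBilin, LinearMap.mem_ker, LinearMap.ext_iff]
    exact forall_congr' (polar_quadrilateralForm_flatQuadrilateral_eq_zero_iff hσ hA hC c)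
  rw [hpolar, LinearMap.BilinForm.mem_orthogonal_iff]
  simp only [← exists_quadrilateralSpace_edge_eq_iff, forall_exists_index,
    forall_apply_eq_imp_iff, hσ.eq_iff]

variable [FiniteDimensional K E]

theorem orthogonal_range_flatQuadrilateral (hσ : σ.IsAlt) (hnd : σ.Nondegenerate)
    (hA : σ.orthogonal A = A) (hC : σ.orthogonal C = C) :
    LinearMap.BilinForm.orthogonal (quadrilateralForm σ A B C D).polarBilin
      (LinearMap.range (flatQuadrilateral A B C D)) = LinearMap.range (glueTriangles A B C D) := by
  ext x
  have hedge : σ.orthogonal (A ⊓ C) = A ⊔ C := by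
    rw [orthogonal_inf_eq_sup hnd hσ.isRefl, hA, hC]
  have hpolar (c : ↥(A ⊓ C)) :=
    polar_quadrilateralForm_flatQuadrilateral_eq_zero_iff hσ hA.ge hC.ge c x
  rw [mem_range_glueTriangles, ← hedge, LinearMap.BilinForm.mem_orthogonal_iff,
    LinearMap.BilinForm.mem_orthogonal_iff]
  exact Set.forall_mem_range.trans ((forall_congr' hpolar).trans Subtype.forall)

theorem finrank_range_flatQuadrilateral_inf_radical (hσ : σ.IsAlt) (hnd : σ.Nondegenerate)
    (hA : σ.orthogonal A = A) (hB : σ.orthogonal B = B) (hC : σ.orthogonal C = C)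
    (hD : σ.orthogonal D = D) :
    finrank K ↥(LinearMap.range (flatQuadrilateral A B C D) ⊓
      (quadrilateralForm σ A B C D).radical) = finrank K ↥(A ⊓ B ⊓ C ⊔ A ⊓ C ⊓ D) := by
  set Rad := (quadrilateralForm σ A B C D).radical
  have horth : σ.orthogonal (B ⊓ (A ⊔ C ⊔ D)) = B ⊔ A ⊓ C ⊓ D := by
    rw [orthogonal_inf_eq_sup hnd hσ.isRefl, orthogonal_sup_eq_inf, orthogonal_sup_eq_inf,
      hA, hB, hC, hD]
  have hcomap : Rad.comap (flatQuadrilateral A B C D) =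
      (B ⊔ A ⊓ C ⊓ D).comap (A ⊓ C).subtype := by
    ext c
    rw [Submodule.mem_comap, flatQuadrilateral_mem_radical_iff hσ hA.ge hC.ge, horth]
    rfl
  have hmodular : A ⊓ C ⊓ (B ⊔ A ⊓ C ⊓ D) = A ⊓ B ⊓ C ⊔ A ⊓ C ⊓ D := by
    rw [inf_comm, sup_comm, sup_inf_assoc_of_le B inf_le_left, sup_comm, inf_left_comm,
      inf_assoc A B C]
  rw [← Submodule.map_comap_eq, hcomap,
    ← (Submodule.equivMapOfInjective _ flatQuadrilateral_injective _).finrank_eq,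
    ← Submodule.finrank_map_subtype_eq, Submodule.map_comap_subtype, hmodular]

end FlatQuadrilateral

section PolygonSignature

open Module QuadraticMap

variable {𝕜 E : Type*} [Field 𝕜] [LinearOrder 𝕜] [AddCommGroup E] [Module 𝕜 E]
  [FiniteDimensional 𝕜 E] {σ : LinearMap.BilinForm 𝕜 E}

theorem sigNeg_triangleForm_rotate (hσ : σ.IsAlt) (A B C : Submodule 𝕜 E) :
    sigNeg (triangleForm σ B C A) = sigNeg (triangleForm σ A B C) := by
  have hle (A B C : Submodule 𝕜 E) :
      sigNeg (triangleForm σ A B C) ≤ sigNeg (triangleForm σ B C A) := by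
    rw [← triangleForm_comp_rotateTriangle hσ]
    exact sigNeg_comp_le _ _
  exact ((hle B C A).trans (hle C A B)).antisymm (hle A B C)

theorem sigNeg_quadrilateralForm_rotate (hσ : σ.IsAlt) (A B C D : Submodule 𝕜 E) :
    sigNeg (quadrilateralForm σ B C D A) = sigNeg (quadrilateralForm σ A B C D) := by
  have hle (A B C D : Submodule 𝕜 E) :
      sigNeg (quadrilateralForm σ A B C D) ≤ sigNeg (quadrilateralForm σ B C D A) := by
    rw [← quadrilateralForm_comp_rotateQuadrilateral hσ]
    exact sigNeg_comp_le _ _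
  exact (((hle B C D A).trans (hle C D A B)).trans (hle D A B C)).antisymm (hle A B C D)

theorem sigNeg_quadrilateralForm_add [IsStrictOrderedRing 𝕜] {A B C D : Submodule 𝕜 E}
    (hσ : σ.IsAlt) (hnd : σ.Nondegenerate)
    (hA : σ.orthogonal A = A) (hB : σ.orthogonal B = B) (hC : σ.orthogonal C = C)
    (hD : σ.orthogonal D = D) :
    sigNeg (quadrilateralForm σ A B C D) + finrank 𝕜 ↥(A ⊓ B ⊓ C) + finrank 𝕜 ↥(A ⊓ C ⊓ D) =
      sigNeg (triangleForm σ A B C) + sigNeg (triangleForm σ A C D) + finrank 𝕜 ↥(A ⊓ C) +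
        finrank 𝕜 ↥(A ⊓ B ⊓ C ⊓ D) := by
  have hflat : ∀ x ∈ LinearMap.range (flatQuadrilateral A B C D),
      quadrilateralForm σ A B C D x = 0 := by
    rintro _ ⟨c, rfl⟩
    exact quadrilateralForm_flatQuadrilateral hσ c
  have hreduction := sigNeg_add_finrank_isotropic_inf_radical hflat
  rw [orthogonal_range_flatQuadrilateral hσ hnd hA hC, sigNeg_restrict_range,
    quadrilateralForm_comp_glueTriangles hσ hA.ge hC.ge, sigNeg_prod,
    finrank_range_flatQuadrilateral_inf_radical hσ hnd hA hB hC hD,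
    LinearMap.finrank_range_of_inj flatQuadrilateral_injective] at hreduction
  have hinf : A ⊓ B ⊓ C ⊓ (A ⊓ C ⊓ D) = A ⊓ B ⊓ C ⊓ D := by
    rw [← inf_assoc, inf_eq_left.2 (inf_le_inf_right C inf_le_left)]
  have hsup := Submodule.finrank_sup_add_finrank_inf_eq (A ⊓ B ⊓ C) (A ⊓ C ⊓ D)
  rw [hinf] at hsup
  lia

end PolygonSignature

section MaslovIndex

open Module QuadraticMap

theorem triangleForm_eq_of_edge_eq_add {R E : Type*} [CommRing R] [AddCommGroup E] [Module R E]
    {σ : LinearMap.BilinForm R E} {A B C : Submodule R E} (hσ : σ.IsAlt)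
    (hA : A ≤ σ.orthogonal A) (hC : C ≤ σ.orthogonal C) {x : triangleSpace A B C} {l₀ l₂ : E}
    (h₀ : l₀ ∈ A) (h₂ : l₂ ∈ C) (h : x.1.2 = l₀ + l₂) : triangleForm σ A B C x = σ l₀ l₂ := by
  obtain ⟨hxA, -, hxC⟩ := mem_triangleSpace.1 x.2
  have hsum : x.1.1 + l₀ ∈ C := by
    have := C.sub_mem hxC h₂
    rwa [h, ← add_assoc, add_sub_cancel_right] at this
  have hA₀ : σ l₀ x.1.1 = 0 := hA hxA l₀ h₀
  have hC₂ : σ l₂ (x.1.1 + l₀) = 0 := hC hsum l₂ h₂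
  rw [map_add] at hC₂
  rw [triangleForm_apply, h, map_add, LinearMap.add_apply]
  linear_combination hA₀ + hC₂ + hσ.neg_eq l₂ l₀

theorem range_triangleSpace_edge {R E : Type*} [CommRing R] [AddCommGroup E] [Module R E]
    (A B C : Submodule R E) :
    LinearMap.range (LinearMap.snd R E E ∘ₗ (triangleSpace A B C).subtype) = B ⊓ (A ⊔ C) := by
  ext b
  constructor
  · rintro ⟨x, rfl⟩
    obtain ⟨ha, hb, hc⟩ := mem_triangleSpace.1 x.2
    have hsum : x.1.2 = -x.1.1 + (x.1.1 + x.1.2) := by abel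
    exact ⟨hb, Submodule.mem_sup.2 ⟨-x.1.1, A.neg_mem ha, x.1.1 + x.1.2, hc, hsum.symm⟩⟩
  · rintro ⟨hb, hac⟩
    obtain ⟨a, ha, c, hc, rfl⟩ := Submodule.mem_sup.1 hac
    exact ⟨⟨(-a, a + c), mem_triangleSpace.2 ⟨A.neg_mem ha, hb, by simpa using hc⟩⟩, rfl⟩

variable {E : Type*} [AddCommGroup E] [Module ℝ E] [FiniteDimensional ℝ E]
  {σ : LinearMap.BilinForm ℝ E} {A B C : Submodule ℝ E}

theorem exists_finrank_eq_sigNeg_triangleForm (hσ : σ.IsAlt) (hA : A ≤ σ.orthogonal A)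
    (hC : C ≤ σ.orthogonal C) :
    ∃ W : Submodule ℝ E, W ≤ B ⊓ (A ⊔ C) ∧
      (∀ v ∈ W, v ≠ 0 → ∀ l₀ ∈ A, ∀ l₂ ∈ C, v = l₀ + l₂ → σ l₀ l₂ < 0) ∧
      finrank ℝ W = sigNeg (triangleForm σ A B C) := by
  obtain ⟨V, hVdim, hV⟩ := exists_finrank_eq_sigNeg_and_negDef (triangleForm σ A B C)
  let edge := LinearMap.snd ℝ E E ∘ₗ (triangleSpace A B C).subtype
  have hneg (x : V) (hx : x ≠ 0) : triangleForm σ A B C x < 0 := neg_pos.1 (hV x hx)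
  have hinj : Function.Injective (edge ∘ₗ V.subtype) := by
    refine (injective_iff_map_eq_zero _).2 fun x (hx : x.1.1.2 = 0) => ?_
    by_contra hne
    exact (hneg x hne).ne (by simp [triangleForm_apply, hx])
  refine ⟨LinearMap.range (edge ∘ₗ V.subtype), ?_, ?_, ?_⟩
  · rw [← range_triangleSpace_edge]
    exact LinearMap.range_comp_le_range _ _
  · rintro _ ⟨x, rfl⟩ hx l₀ h₀ l₂ h₂ h
    rw [← triangleForm_eq_of_edge_eq_add hσ hA hC h₀ h₂ h]
    exact hneg x fun h0 => hx (by simp [h0])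
  · rw [LinearMap.finrank_range_of_inj hinj, hVdim]

theorem finrank_le_sigNeg_triangleForm (hσ : σ.IsAlt) (hA : A ≤ σ.orthogonal A)
    (hC : C ≤ σ.orthogonal C) {W : Submodule ℝ E} (hW : W ≤ B ⊓ (A ⊔ C))
    (hneg : ∀ v ∈ W, v ≠ 0 → ∀ l₀ ∈ A, ∀ l₂ ∈ C, v = l₀ + l₂ → σ l₀ l₂ < 0) :
    finrank ℝ W ≤ sigNeg (triangleForm σ A B C) := by
  rw [← range_triangleSpace_edge] at hW
  let edge := LinearMap.snd ℝ E E ∘ₗ (triangleSpace A B C).subtype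
  obtain ⟨lift, hlift⟩ := Module.projective_lifting_property edge.rangeRestrict
    (Submodule.inclusion hW) edge.surjective_rangeRestrict
  refine finrank_le_sigPos_of_posDef_comp (Q := -triangleForm σ A B C) (f := lift) fun w hw => ?_
  obtain ⟨ha, -, hc⟩ := mem_triangleSpace.1 (lift w).2
  have hedge : (lift w).1.2 = w := congrArg Subtype.val (LinearMap.congr_fun hlift w)
  have hsum : (lift w).1.2 = -(lift w).1.1 + ((lift w).1.1 + (lift w).1.2) := by abel
  refine neg_pos.2 ?_
  rw [triangleForm_eq_of_edge_eq_add hσ hA hC (A.neg_mem ha) hc hsum]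
  exact hneg w w.2 (by simpa using hw) _ (A.neg_mem ha) _ hc (hedge ▸ hsum)

theorem maslovIndex_eq_sigNeg_triangleForm (hσ : σ.IsAlt) (hA : A ≤ σ.orthogonal A)
    (hC : C ≤ σ.orthogonal C) : maslovIndex σ A B C = sigNeg (triangleForm σ A B C) := by
  refine IsGreatest.csSup_eq ⟨exists_finrank_eq_sigNeg_triangleForm hσ hA hC, ?_⟩
  rintro _ ⟨W, hW, hneg, rfl⟩
  exact finrank_le_sigNeg_triangleForm hσ hA hC hW hneg

end MaslovIndex

/-- the coboundary (defect of the cocycle property) formula for the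
negative Maslov index of four Lagrangian subspaces. -/
theorem maslov_cocycle_defect {E : Type*} [AddCommGroup E] [Module ℝ E]
    [FiniteDimensional ℝ E] (σ : LinearMap.BilinForm ℝ E)
    (halt : ∀ v, σ v v = 0) (hnd : LinearMap.BilinForm.Nondegenerate σ)
    (L0 L1 L2 L3 : Submodule ℝ E)
    (h0 : IsLagrangian σ L0) (h1 : IsLagrangian σ L1)
    (h2 : IsLagrangian σ L2) (h3 : IsLagrangian σ L3) :
    -(maslovIndex σ L1 L2 L3 : ℤ) + (maslovIndex σ L0 L2 L3 : ℤ)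
      - (maslovIndex σ L0 L1 L3 : ℤ) + (maslovIndex σ L0 L1 L2 : ℤ)
    = (Module.finrank ℝ ↥(L1 ⊓ L3) : ℤ) - (Module.finrank ℝ ↥(L0 ⊓ L2) : ℤ)
      - (Module.finrank ℝ ↥(L1 ⊓ L2 ⊓ L3) : ℤ) + (Module.finrank ℝ ↥(L0 ⊓ L2 ⊓ L3) : ℤ)
      - (Module.finrank ℝ ↥(L0 ⊓ L1 ⊓ L3) : ℤ) + (Module.finrank ℝ ↥(L0 ⊓ L1 ⊓ L2) : ℤ) := by
  have hσ : σ.IsAlt := halt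
  have hL0 := h0.orthogonal_eq hσ
  have hL1 := h1.orthogonal_eq hσ
  have hL2 := h2.orthogonal_eq hσ
  have hL3 := h3.orthogonal_eq hσ
  have hcut02 := sigNeg_quadrilateralForm_add hσ hnd hL0 hL1 hL2 hL3
  have hcut13 := sigNeg_quadrilateralForm_add hσ hnd hL1 hL2 hL3 hL0
  rw [sigNeg_quadrilateralForm_rotate hσ L0, sigNeg_triangleForm_rotate hσ L0,
    inf_right_comm L1 L3 L0, inf_comm L1 L0, inf_comm (L1 ⊓ L2 ⊓ L3) L0, ← inf_assoc,
    ← inf_assoc] at hcut13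
  simp only [maslovIndex_eq_sigNeg_triangleForm hσ hL0.ge hL2.ge,
    maslovIndex_eq_sigNeg_triangleForm hσ hL0.ge hL3.ge,
    maslovIndex_eq_sigNeg_triangleForm hσ hL1.ge hL3.ge]
  lia
end

section
/- The negative Maslov index is invariant under cyclic permutations: for any three Lagrangian subspaces L0, L1, L2 of a finite-dimensional real symplectic vector space (Σ, σ), one has i(L0,L1,L2) = i(L1,L2,L0) = i(L2,L0,L1). -/
/-!
If `l1 = l0 + l2`, then `l2 = l1 + (-l0)` is a decomposition for the rotated triple `(L1, L2, L0)`,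
and `σ(l1, -l0) = σ(l0, l2)`. So a linear choice of `l2` for `l1` in a negative definite subspace
`W` carries `m(L0, L1, L2)` to `m(L1, L2, L0)`. It is injective on `W`: if `l2 = 0`, then
`m(l1) = σ(l0, 0) = 0`, which forces `l1 = 0`.
-/

section Decomposition

variable {K V : Type*} [DivisionRing K] [AddCommGroup V] [Module K V]

theorem exists_linearMap_add_eq_of_le_sup {W P Q : Submodule K V} (hW : W ≤ P ⊔ Q) :
    ∃ (p : W →ₗ[K] P) (q : W →ₗ[K] Q), ∀ w : W, (w : V) = p w + q w := by
  let sumMap : P × Q →ₗ[K] V := P.subtype.coprod Q.subtype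
  have range_sumMap : LinearMap.range sumMap = P ⊔ Q := by
    simp only [sumMap, LinearMap.range_coprod, Submodule.range_subtype]
  obtain ⟨s, hs⟩ :=
    sumMap.rangeRestrict.exists_rightInverse_of_surjective sumMap.range_rangeRestrict
  let split : W →ₗ[K] P × Q := s ∘ₗ Submodule.inclusion (hW.trans_eq range_sumMap.symm)
  refine ⟨LinearMap.fst K P Q ∘ₗ split, LinearMap.snd K P Q ∘ₗ split, fun w => ?_⟩
  exact congrArg Subtype.val (LinearMap.congr_fun hs (Submodule.inclusion _ w)).symm

end Decomposition

section Rotation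

variable {R M : Type*} [CommRing R] [AddCommGroup M] [Module R M] {σ : LinearMap.BilinForm R M}

theorem apply_rotate_decomposition_eq (hσ : σ.IsAlt) {x y u a b : M} (hxyu : x = y + u)
    (huab : u = a + b) (hax : σ a x = 0) (hyb : σ y b = 0) : σ a b = σ y u := by
  calc
    σ a b = σ a u := by rw [huab, map_add, hσ.self_eq_zero, zero_add]
    _ = -σ a y := by
      rw [hxyu, map_add] at hax
      exact eq_neg_of_add_eq_zero_right hax
    _ = σ y a := hσ.neg_eq a y
    _ = σ y u := by rw [huab, map_add, hyb, add_zero]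

end Rotation

section MaslovIndex

variable {E : Type*} [AddCommGroup E] [Module ℝ E] {σ : LinearMap.BilinForm ℝ E}
  {L0 L1 L2 W : Submodule ℝ E}

/-- `W` is a subspace of `L1 ∩ (L0 + L2)` on which the Maslov form `m(L0, L1, L2)` is negative
definite; the negative Maslov index is the supremum of their dimensions. As in `maslovIndex`,
the sign condition is imposed on every decomposition of a vector of `W`, so that the form itself
need not be constructed. -/
def IsMaslovNegDef (σ : LinearMap.BilinForm ℝ E) (L0 L1 L2 W : Submodule ℝ E) : Prop :=
  W ≤ L1 ⊓ (L0 ⊔ L2) ∧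
    ∀ v ∈ W, v ≠ 0 → ∀ l0 ∈ L0, ∀ l2 ∈ L2, v = l0 + l2 → σ l0 l2 < 0

theorem maslovIndex_eq_sSup_finrank :
    maslovIndex σ L0 L1 L2 =
      sSup {d | ∃ W, IsMaslovNegDef σ L0 L1 L2 W ∧ Module.finrank ℝ W = d} := by
  simp only [maslovIndex, IsMaslovNegDef, and_assoc]

namespace IsMaslovNegDef

theorem disjoint_left (hW : IsMaslovNegDef σ L0 L1 L2 W) : Disjoint W L0 := by
  rw [Submodule.disjoint_def]
  intro v hvW hv0
  by_contra hv
  have hneg : σ v 0 < 0 := hW.2 v hvW hv v hv0 0 L2.zero_mem (add_zero v).symm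
  simp at hneg

theorem exists_rotate (hW : IsMaslovNegDef σ L0 L1 L2 W) (hσ : σ.IsAlt)
    (h0 : L0 ≤ sympOrth σ L0) (h1 : L1 ≤ sympOrth σ L1) :
    ∃ W', IsMaslovNegDef σ L1 L2 L0 W' ∧ Module.finrank ℝ W' = Module.finrank ℝ W := by
  obtain ⟨p, q, hpq⟩ := exists_linearMap_add_eq_of_le_sup (hW.1.trans inf_le_right)
  let t : W →ₗ[ℝ] E := L2.subtype ∘ₗ q
  have decomp (w : W) : (w : E) = p w + t w := hpq w
  have t_injective : Function.Injective t := by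
    rw [injective_iff_map_eq_zero]
    intro w hw
    have hw0 : (w : E) ∈ L0 := by
      rw [decomp w, hw, add_zero]
      exact (p w).2
    exact Subtype.ext (Submodule.disjoint_def.mp hW.disjoint_left w w.2 hw0)
  refine ⟨LinearMap.range t, ⟨?_, ?_⟩, LinearMap.finrank_range_of_inj t_injective⟩
  · rintro _ ⟨w, rfl⟩
    have ht : t w = w - p w := eq_sub_of_add_eq' (decomp w).symm
    exact ⟨(q w).2, ht ▸ Submodule.sub_mem_sup (hW.1 w.2).1 (p w).2⟩
  · rintro _ ⟨w, rfl⟩ htw l1 hl1 l0 hl0 hsum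
    have hw : (w : E) ≠ 0 := by
      rw [Ne, Submodule.coe_eq_zero]
      rintro rfl
      exact htw (map_zero t)
    calc
      σ l1 l0 = σ (p w) (t w) :=
        apply_rotate_decomposition_eq hσ (decomp w) hsum (h1 hl1 w (hW.1 w.2).1)
          (h0 (p w).2 l0 hl0)
      _ < 0 := hW.2 w w.2 hw (p w) (p w).2 (t w) (q w).2 (decomp w)

end IsMaslovNegDef

theorem maslovIndex_rotate (hσ : σ.IsAlt) (h0 : L0 ≤ sympOrth σ L0) (h1 : L1 ≤ sympOrth σ L1)
    (h2 : L2 ≤ sympOrth σ L2) : maslovIndex σ L0 L1 L2 = maslovIndex σ L1 L2 L0 := by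
  simp only [maslovIndex_eq_sSup_finrank]
  congr 1
  ext d
  constructor
  · rintro ⟨W, hW, rfl⟩
    exact hW.exists_rotate hσ h0 h1
  -- Three rotations return to the original triple, so two more invert the first one.
  · rintro ⟨W, hW, rfl⟩
    obtain ⟨W', hW', hfinrank'⟩ := hW.exists_rotate hσ h1 h2
    obtain ⟨W'', hW'', hfinrank''⟩ := hW'.exists_rotate hσ h2 h0
    exact ⟨W'', hW'', hfinrank''.trans hfinrank'⟩

theorem maslov_cyclic_invariance_general (hσ : σ.IsAlt) (h0 : L0 ≤ sympOrth σ L0)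
    (h1 : L1 ≤ sympOrth σ L1) (h2 : L2 ≤ sympOrth σ L2) :
    maslovIndex σ L0 L1 L2 = maslovIndex σ L1 L2 L0 ∧
      maslovIndex σ L1 L2 L0 = maslovIndex σ L2 L0 L1 :=
  ⟨maslovIndex_rotate hσ h0 h1 h2, maslovIndex_rotate hσ h1 h2 h0⟩

end MaslovIndex

/-- the negative Maslov index is invariant under cyclic permutations of the
three Lagrangian subspaces. -/
theorem maslov_cyclic_invariance {E : Type*} [AddCommGroup E] [Module ℝ E]
    [FiniteDimensional ℝ E] (σ : LinearMap.BilinForm ℝ E)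
    (halt : ∀ v, σ v v = 0) (hnd : LinearMap.BilinForm.Nondegenerate σ)
    (L0 L1 L2 : Submodule ℝ E)
    (h0 : IsLagrangian σ L0) (h1 : IsLagrangian σ L1) (h2 : IsLagrangian σ L2) :
    maslovIndex σ L0 L1 L2 = maslovIndex σ L1 L2 L0 ∧
    maslovIndex σ L1 L2 L0 = maslovIndex σ L2 L0 L1 :=
  maslov_cyclic_invariance_general halt h0.le h1.le h2.le
end

section
/- Symplectic reduction of the Maslov index: let L0, L1, L2 be Lagrangian subspaces of a finite-dimensional real symplectic vector space (Σ, σ) and let V ⊆ L0 ∩ L2 be a subspace (necessarily isotropic, since it lies in a Lagrangian subspace). Then the quotient V^⊥/V carries a well-defined induced symplectic form; for every Lagrangian subspace L of Σ the subspace L^V := ((L ∩ V^⊥) + V)/V is a Lagrangian subspace of V^⊥/V; and the negative Maslov indices satisfy i(L0, L1, L2) = i(L0^V, L1^V, L2^V). -/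
/-- The symplectic reduction of a subspace `L` by an isotropic subspace `V`:
`L^V = ((L ∩ V^⊥) + V) / V`, viewed as a subspace of the quotient `V^⊥ / V`. -/
noncomputable def sympReduce {E : Type*} [AddCommGroup E] [Module ℝ E]
    (σ : LinearMap.BilinForm ℝ E) (V : Submodule ℝ E) (L : Submodule ℝ E) :
    Submodule ℝ (↥(sympOrth σ V) ⧸ Submodule.comap (sympOrth σ V).subtype V) :=
  Submodule.map (Submodule.comap (sympOrth σ V).subtype V).mkQ
    (Submodule.comap (sympOrth σ V).subtype ((L ⊓ sympOrth σ V) ⊔ V))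

/-!
The Maslov form on `A = L1 ∩ (L0 + L2)` is the pullback of the reduced Maslov form along the
projection `V^⊥ → V^⊥/V`: decompositions of `x` and of its class differ only by an element of `V`,
which may be absorbed into `L0` and is `σ`-orthogonal to `L2`. By the modular law this projection
maps `A` onto `L1^V ∩ (L0^V + L2^V)`, and pulling a form back along a surjective linear map does not
change its negative inertia index. That reduction preserves Lagrangian subspaces comes down to
`(L + V)^⊥⊥ = L + V`, which holds whenever `L^⊥⊥ = L` and `V` is finite-dimensional.
-/

section DefiniteDims

variable {K E F : Type*} [Field K] [AddCommGroup E] [Module K E] [AddCommGroup F] [Module K F]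

/-- The dimensions of the subspaces of `A` whose nonzero vectors all satisfy `P`. With `P v` saying
that a quadratic form is negative at `v`, the supremum is the negative inertia index of that form
on `A`. Infinite-dimensional subspaces contribute only `Module.finrank = 0`. -/
def definiteDims (A : Submodule K E) (P : E → Prop) : Set ℕ :=
  {d | ∃ W : Submodule K E, W ≤ A ∧ (∀ v ∈ W, v ≠ 0 → P v) ∧ Module.finrank K W = d}

variable {A : Submodule K E} {B : Submodule K F} {P : E → Prop} {Q : F → Prop} {f : A →ₗ[K] F}

theorem definiteDims_subset_of_range_le (hf : LinearMap.range f ≤ B)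
    (hPQ : ∀ a : A, P a → Q (f a)) (hQ : ¬ Q 0) : definiteDims A P ⊆ definiteDims B Q := by
  rintro d ⟨W, hWA, hWP, rfl⟩
  let g : W →ₗ[K] F := f ∘ₗ Submodule.inclusion hWA
  have map_definite (w : W) (hw : w ≠ 0) : Q (g w) :=
    hPQ _ (hWP w w.2 (by simpa using hw))
  have g_injective : Function.Injective g :=
    (injective_iff_map_eq_zero g).2 fun w hgw ↦
      by_contra fun hw ↦ hQ (hgw ▸ map_definite w hw)
  refine ⟨LinearMap.range g, (LinearMap.range_comp_le_range _ _).trans hf, ?_,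
    LinearMap.finrank_range_of_inj g_injective⟩
  rintro _ ⟨w, rfl⟩ hgw
  exact map_definite w (ne_of_apply_ne g (by simpa using hgw))

theorem definiteDims_subset_of_le_range (hf : B ≤ LinearMap.range f)
    (hQP : ∀ a : A, Q (f a) → P a) : definiteDims B Q ⊆ definiteDims A P := by
  rintro d ⟨W, hWB, hWQ, rfl⟩
  obtain ⟨s, hs⟩ :=
    LinearMap.exists_rightInverse_of_surjective f.rangeRestrict f.range_rangeRestrict
  let lift : W →ₗ[K] A := s ∘ₗ Submodule.inclusion (hWB.trans hf)
  have f_lift (w : W) : f (lift w) = w :=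
    congrArg Subtype.val (LinearMap.congr_fun hs (Submodule.inclusion (hWB.trans hf) w))
  have lift_injective : Function.Injective (A.subtype ∘ₗ lift) :=
    A.injective_subtype.comp fun w w' h ↦ Subtype.ext (by rw [← f_lift w, ← f_lift w', h])
  refine ⟨LinearMap.range (A.subtype ∘ₗ lift), ?_, ?_,
    LinearMap.finrank_range_of_inj lift_injective⟩
  · rintro _ ⟨w, rfl⟩
    exact (lift w).2
  · rintro _ ⟨w, rfl⟩ hw
    refine hQP _ (f_lift w ▸ hWQ w w.2 ?_)
    simpa using ne_of_apply_ne (A.subtype ∘ₗ lift) (by simpa using hw)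

end DefiniteDims

section Reduction

variable {E : Type*} [AddCommGroup E] [Module ℝ E] {σ : LinearMap.BilinForm ℝ E}
  {V L L0 L2 : Submodule ℝ E}

theorem sympOrth_eq_comap_dualAnnihilator (σ : LinearMap.BilinForm ℝ E) (W : Submodule ℝ E) :
    sympOrth σ W = W.dualAnnihilator.comap σ := by
  ext u
  simp only [Submodule.mem_comap, Submodule.mem_dualAnnihilator]
  rfl

theorem sympOrth_anti {W W' : Submodule ℝ E} (h : W ≤ W') : sympOrth σ W' ≤ sympOrth σ W :=
  fun _ hu w hw ↦ hu w (h hw)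

theorem sympOrth_sup (σ : LinearMap.BilinForm ℝ E) (W W' : Submodule ℝ E) :
    sympOrth σ (W ⊔ W') = sympOrth σ W ⊓ sympOrth σ W' := by
  simp only [sympOrth_eq_comap_dualAnnihilator, Submodule.dualAnnihilator_sup_eq,
    Submodule.comap_inf]

theorem le_sympOrth_sympOrth (hσ : σ.IsRefl) (W : Submodule ℝ E) :
    W ≤ sympOrth σ (sympOrth σ W) :=
  fun w hw _ hu ↦ hσ.eq_zero (hu w hw)

theorem sympOrth_sympOrth_bot (hσ : σ.Nondegenerate) : sympOrth σ (sympOrth σ ⊥) = ⊥ := by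
  have sympOrth_bot (y : E) : y ∈ sympOrth σ ⊥ := by
    rintro _ rfl
    exact map_zero _
  exact eq_bot_iff.2 fun u hu ↦ hσ.1 u fun y ↦ hu y (sympOrth_bot y)

theorem sympOrth_sympOrth_sup [FiniteDimensional ℝ V] (hσ : σ.IsRefl)
    (hL : sympOrth σ (sympOrth σ L) = L) : sympOrth σ (sympOrth σ (L ⊔ V)) = L ⊔ V := by
  refine (le_sympOrth_sympOrth hσ _).antisymm' fun u hu ↦ ?_
  let pairing : E →ₗ[ℝ] Module.Dual ℝ (sympOrth σ L) := (sympOrth σ L).dualRestrict ∘ₗ σ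
  -- Finitely many functionals span every functional vanishing on their common kernel.
  have pairing_mem : pairing u ∈ V.map pairing := by
    rw [← Subspace.dualCoannihilator_dualAnnihilator_eq (W := V.map pairing),
      Submodule.mem_dualAnnihilator]
    intro y hy
    have hyV : (y : E) ∈ sympOrth σ V := fun v hv ↦
      hσ.eq_zero ((Submodule.mem_dualCoannihilator _).1 hy _ (Submodule.mem_map_of_mem hv))
    exact hu y ((sympOrth_sup σ L V).ge ⟨y.2, hyV⟩)
  obtain ⟨v, hv, hvu⟩ := pairing_mem
  have sub_mem : u - v ∈ L := by
    rw [← hL]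
    intro y hy
    rw [map_sub, LinearMap.sub_apply, sub_eq_zero]
    exact (LinearMap.congr_fun hvu ⟨y, hy⟩).symm
  rw [← sub_add_cancel u v]
  exact Submodule.add_mem_sup sub_mem hv

/-- The space `V^⊥/V` of the symplectic reduction by `V`. For `V` not isotropic this is
`V^⊥/(V ∩ V^⊥)`. -/
abbrev SympQuotient (σ : LinearMap.BilinForm ℝ E) (V : Submodule ℝ E) : Type _ :=
  ↥(sympOrth σ V) ⧸ Submodule.comap (sympOrth σ V).subtype V

/-- The projection `V^⊥ → V^⊥/V`. -/
abbrev sympMkQ (σ : LinearMap.BilinForm ℝ E) (V : Submodule ℝ E) :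
    sympOrth σ V →ₗ[ℝ] SympQuotient σ V :=
  (Submodule.comap (sympOrth σ V).subtype V).mkQ

theorem sympMkQ_surjective (σ : LinearMap.BilinForm ℝ E) (V : Submodule ℝ E) :
    Function.Surjective (sympMkQ σ V) :=
  Submodule.mkQ_surjective _

theorem sympMkQ_eq_iff {x y : sympOrth σ V} :
    sympMkQ σ V x = sympMkQ σ V y ↔ (x - y : E) ∈ V :=
  Submodule.Quotient.eq _

theorem sympMkQ_mem_sympReduce_iff {x : sympOrth σ V} :
    sympMkQ σ V x ∈ sympReduce σ V L ↔ (x : E) ∈ (L ⊓ sympOrth σ V) ⊔ V := by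
  have ker_le : LinearMap.ker (sympMkQ σ V) ≤
      ((L ⊓ sympOrth σ V) ⊔ V).comap (sympOrth σ V).subtype := by
    rw [Submodule.ker_mkQ]
    exact Submodule.comap_mono le_sup_right
  rw [sympReduce, ← Submodule.mem_comap, Submodule.comap_map_eq_self ker_le]
  rfl

theorem sympMkQ_mem_sympReduce {x : sympOrth σ V} (hx : (x : E) ∈ L) :
    sympMkQ σ V x ∈ sympReduce σ V L :=
  sympMkQ_mem_sympReduce_iff.2 (Submodule.mem_sup_left ⟨hx, x.2⟩)

theorem mem_sympReduce_iff_exists {z : SympQuotient σ V} :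
    z ∈ sympReduce σ V L ↔ ∃ x : sympOrth σ V, (x : E) ∈ L ∧ sympMkQ σ V x = z := by
  refine ⟨fun hz ↦ ?_, fun ⟨x, hx, hxz⟩ ↦ hxz ▸ sympMkQ_mem_sympReduce hx⟩
  obtain ⟨x, rfl⟩ := sympMkQ_surjective σ V z
  obtain ⟨l, ⟨hl, hlV⟩, v, hv, hlv⟩ := Submodule.mem_sup.1 (sympMkQ_mem_sympReduce_iff.1 hz)
  refine ⟨⟨l, hlV⟩, hl, sympMkQ_eq_iff.2 ?_⟩
  simpa [← hlv] using hv

theorem sympReduce_eq_map (σ : LinearMap.BilinForm ℝ E) (V L : Submodule ℝ E) :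
    sympReduce σ V L = (L.submoduleOf (sympOrth σ V)).map (sympMkQ σ V) :=
  Submodule.ext fun _ ↦ mem_sympReduce_iff_exists

theorem sympReduce_eq_range_sympMkQ_comp_inclusion (hL : L ≤ sympOrth σ V) :
    sympReduce σ V L = LinearMap.range (sympMkQ σ V ∘ₗ Submodule.inclusion hL) := by
  rw [sympReduce_eq_map, LinearMap.range_comp, Submodule.range_inclusion]
  rfl

theorem sympReduce_sup (h0 : L0 ≤ sympOrth σ V) (h2 : L2 ≤ sympOrth σ V) :
    sympReduce σ V (L0 ⊔ L2) = sympReduce σ V L0 ⊔ sympReduce σ V L2 := by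
  simp only [sympReduce_eq_map, Submodule.submoduleOf_sup_of_le h0 h2, Submodule.map_sup]

theorem sympReduce_inf_of_le (L : Submodule ℝ E) {M : Submodule ℝ E} (hVM : V ≤ M) :
    sympReduce σ V (L ⊓ M) = sympReduce σ V L ⊓ sympReduce σ V M := by
  have modular_law :
      (L ⊓ M ⊓ sympOrth σ V) ⊔ V = ((L ⊓ sympOrth σ V) ⊔ V) ⊓ ((M ⊓ sympOrth σ V) ⊔ V) := by
    refine le_antisymm (le_inf (by gcongr; exact inf_le_left) (by gcongr; exact inf_le_right)) ?_
    calc ((L ⊓ sympOrth σ V) ⊔ V) ⊓ ((M ⊓ sympOrth σ V) ⊔ V)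
      _ ≤ (V ⊔ (L ⊓ sympOrth σ V)) ⊓ M := inf_le_inf (sup_comm _ _).le (sup_le inf_le_left hVM)
      _ = (L ⊓ M ⊓ sympOrth σ V) ⊔ V := by
        rw [sup_inf_assoc_of_le _ hVM, sup_comm, inf_right_comm]
  ext z
  obtain ⟨x, rfl⟩ := sympMkQ_surjective σ V z
  rw [Submodule.mem_inf]
  simp only [sympMkQ_mem_sympReduce_iff]
  rw [modular_law, Submodule.mem_inf]

/-- The form induced by `σ` on `V^⊥/V`. Reflexivity of `σ` makes both of its arguments
factor through the quotient. -/
noncomputable def reducedForm (hσ : σ.IsRefl) (V : Submodule ℝ E) :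
    LinearMap.BilinForm ℝ (SympQuotient σ V) :=
  LinearMap.liftQ₂ _ _ (σ.domRestrict₁₂ (sympOrth σ V) (sympOrth σ V))
    (fun v hv ↦ LinearMap.ext fun y ↦ hσ.eq_zero (y.2 v hv))
    (fun v hv ↦ LinearMap.ext fun y ↦ y.2 v hv)

theorem reducedForm_sympMkQ (hσ : σ.IsRefl) (x y : sympOrth σ V) :
    reducedForm hσ V (sympMkQ σ V x) (sympMkQ σ V y) = σ x y :=
  rfl

theorem reducedForm_isAlt (hσ : σ.IsAlt) (V : Submodule ℝ E) :
    (reducedForm hσ.isRefl V).IsAlt := by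
  intro z
  obtain ⟨x, rfl⟩ := sympMkQ_surjective σ V z
  exact hσ x

theorem reducedForm_isRefl (hσ : σ.IsRefl) (V : Submodule ℝ E) : (reducedForm hσ V).IsRefl := by
  intro z w h
  obtain ⟨x, rfl⟩ := sympMkQ_surjective σ V z
  obtain ⟨y, rfl⟩ := sympMkQ_surjective σ V w
  exact hσ x y h

theorem reducedForm_nondegenerate (hσ : σ.IsRefl) (hV : sympOrth σ (sympOrth σ V) = V) :
    (reducedForm hσ V).Nondegenerate := by
  refine (LinearMap.IsRefl.nondegenerate_iff_separatingLeft (reducedForm_isRefl hσ V)).2 ?_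
  intro z hz
  obtain ⟨x, rfl⟩ := sympMkQ_surjective σ V z
  have hxV : (x : E) ∈ V := hV.le fun y hy ↦ hz (sympMkQ σ V ⟨y, hy⟩)
  exact (Submodule.Quotient.mk_eq_zero _).2 hxV

theorem sympMkQ_mem_sympOrth_sympReduce_iff (hσ : σ.IsRefl) {x : sympOrth σ V} :
    sympMkQ σ V x ∈ sympOrth (reducedForm hσ V) (sympReduce σ V L) ↔
      (x : E) ∈ sympOrth σ (L ⊓ sympOrth σ V) := by
  constructor
  · rintro hx y ⟨hyL, hyV⟩
    exact hx (sympMkQ σ V ⟨y, hyV⟩) (sympMkQ_mem_sympReduce hyL)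
  · intro hx w hw
    obtain ⟨y, hy, rfl⟩ := mem_sympReduce_iff_exists.1 hw
    exact hx y ⟨hy, y.2⟩

theorem isLagrangian_sympReduce [FiniteDimensional ℝ V] (hσ : σ.IsRefl)
    (hV : V ≤ sympOrth σ V) (hL : IsLagrangian σ L) :
    IsLagrangian (reducedForm hσ V) (sympReduce σ V L) := by
  have sup_eq_sympOrth : L ⊔ V = sympOrth σ (L ⊓ sympOrth σ V) := by
    have orth_eq : sympOrth σ L = L := hL.symm
    have sup_closed : sympOrth σ (sympOrth σ (L ⊔ V)) = L ⊔ V :=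
      sympOrth_sympOrth_sup hσ (by rw [orth_eq, orth_eq])
    rw [← sup_closed, sympOrth_sup, orth_eq]
  have modular_law : (L ⊓ sympOrth σ V) ⊔ V = (L ⊔ V) ⊓ sympOrth σ V := by
    rw [sup_comm, ← sup_inf_assoc_of_le _ hV, sup_comm]
  refine Submodule.ext fun z ↦ ?_
  obtain ⟨x, rfl⟩ := sympMkQ_surjective σ V z
  rw [sympMkQ_mem_sympReduce_iff, sympMkQ_mem_sympOrth_sympReduce_iff, modular_law,
    ← sup_eq_sympOrth, Submodule.mem_inf, and_iff_left x.2]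

/-- The Maslov form of `L0` and `L2` is negative at `v`. Quantifying over all decompositions of `v`
avoids choosing one; the predicate holds vacuously for `v ∉ L0 + L2`. -/
def IsMaslovNeg (σ : LinearMap.BilinForm ℝ E) (L0 L2 : Submodule ℝ E) (v : E) : Prop :=
  ∀ l0 ∈ L0, ∀ l2 ∈ L2, v = l0 + l2 → σ l0 l2 < 0

theorem not_isMaslovNeg_zero (σ : LinearMap.BilinForm ℝ E) (L0 L2 : Submodule ℝ E) :
    ¬ IsMaslovNeg σ L0 L2 0 := fun h ↦ by
  simpa using h 0 L0.zero_mem 0 L2.zero_mem (add_zero 0).symm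

theorem maslovIndex_eq_sSup_definiteDims (σ : LinearMap.BilinForm ℝ E)
    (L0 L1 L2 : Submodule ℝ E) :
    maslovIndex σ L0 L1 L2 = sSup (definiteDims (L1 ⊓ (L0 ⊔ L2)) (IsMaslovNeg σ L0 L2)) :=
  rfl

theorem isMaslovNeg_sympMkQ_iff (hσ : σ.IsRefl) (hV : V ≤ L0) (h0 : L0 ≤ sympOrth σ V)
    (h2 : L2 ≤ sympOrth σ V) {x : sympOrth σ V} :
    IsMaslovNeg (reducedForm hσ V) (sympReduce σ V L0) (sympReduce σ V L2) (sympMkQ σ V x) ↔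
      IsMaslovNeg σ L0 L2 x := by
  constructor
  · intro hx a ha b hb hab
    refine hx (sympMkQ σ V ⟨a, h0 ha⟩) (sympMkQ_mem_sympReduce ha)
      (sympMkQ σ V ⟨b, h2 hb⟩) (sympMkQ_mem_sympReduce hb) ?_
    rw [← map_add]
    exact congrArg _ (Subtype.ext hab)
  · intro hx z hz w hw hzw
    obtain ⟨a, ha, rfl⟩ := mem_sympReduce_iff_exists.1 hz
    obtain ⟨b, hb, rfl⟩ := mem_sympReduce_iff_exists.1 hw
    rw [← map_add, sympMkQ_eq_iff, Submodule.coe_add] at hzw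
    set v : E := x - (a + b)
    have orth : σ v b = 0 := hσ.eq_zero (b.2 v hzw)
    have neg : σ (a + v) b < 0 :=
      hx (a + v) (L0.add_mem ha (hV hzw)) b hb (by simp only [v]; abel)
    rwa [map_add, LinearMap.add_apply, orth, add_zero, ← reducedForm_sympMkQ hσ] at neg

theorem maslovIndex_sympReduce (hσ : σ.IsRefl) (hV : V ≤ L0) (h0 : L0 ≤ sympOrth σ V)
    (h2 : L2 ≤ sympOrth σ V) (L1 : Submodule ℝ E) :
    maslovIndex (reducedForm hσ V) (sympReduce σ V L0) (sympReduce σ V L1) (sympReduce σ V L2) =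
      maslovIndex σ L0 L1 L2 := by
  have hA : L1 ⊓ (L0 ⊔ L2) ≤ sympOrth σ V := inf_le_right.trans (sup_le h0 h2)
  have domain_eq : sympReduce σ V L1 ⊓ (sympReduce σ V L0 ⊔ sympReduce σ V L2) =
      LinearMap.range (sympMkQ σ V ∘ₗ Submodule.inclusion hA) := by
    rw [← sympReduce_sup h0 h2, ← sympReduce_inf_of_le L1 (le_sup_of_le_left hV),
      sympReduce_eq_range_sympMkQ_comp_inclusion hA]
  have neg_iff (a : ↥(L1 ⊓ (L0 ⊔ L2))) :=
    isMaslovNeg_sympMkQ_iff hσ hV h0 h2 (x := Submodule.inclusion hA a)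
  rw [maslovIndex_eq_sSup_definiteDims, maslovIndex_eq_sSup_definiteDims]
  exact congrArg sSup <| Set.Subset.antisymm
    (definiteDims_subset_of_le_range domain_eq.le fun a ↦ (neg_iff a).1)
    (definiteDims_subset_of_range_le domain_eq.ge (fun a ↦ (neg_iff a).2)
      (not_isMaslovNeg_zero _ _ _))

theorem maslov_symplectic_reduction_general (σ : LinearMap.BilinForm ℝ E) (halt : σ.IsAlt)
    (hnd : σ.Nondegenerate) (h0 : L0 ≤ sympOrth σ L0) (h2 : L2 ≤ sympOrth σ L2)
    (L1 : Submodule ℝ E) [FiniteDimensional ℝ V] (hV : V ≤ L0 ⊓ L2) :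
    ∃ σ' : LinearMap.BilinForm ℝ (SympQuotient σ V),
      σ'.IsAlt ∧ σ'.Nondegenerate ∧
      (∀ x y : sympOrth σ V, σ' (sympMkQ σ V x) (sympMkQ σ V y) = σ x y) ∧
      (∀ L : Submodule ℝ E, IsLagrangian σ L → IsLagrangian σ' (sympReduce σ V L)) ∧
      maslovIndex σ L0 L1 L2 =
        maslovIndex σ' (sympReduce σ V L0) (sympReduce σ V L1) (sympReduce σ V L2) := by
  have hV0 : V ≤ L0 := hV.trans inf_le_left
  have hL0 : L0 ≤ sympOrth σ V := h0.trans (sympOrth_anti hV0)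
  have hL2 : L2 ≤ sympOrth σ V := h2.trans (sympOrth_anti (hV.trans inf_le_right))
  have hVV : sympOrth σ (sympOrth σ V) = V := by
    simpa using sympOrth_sympOrth_sup (V := V) halt.isRefl (sympOrth_sympOrth_bot hnd)
  exact ⟨reducedForm halt.isRefl V, reducedForm_isAlt halt V,
    reducedForm_nondegenerate halt.isRefl hVV, reducedForm_sympMkQ halt.isRefl,
    fun _ ↦ isLagrangian_sympReduce halt.isRefl (hV0.trans hL0),
    (maslovIndex_sympReduce halt.isRefl hV0 hL0 hL2 L1).symm⟩

end Reduction

/-- symplectic reduction of the Maslov index.  If `V ⊆ L0 ∩ L2` then the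
quotient `V^⊥/V` carries a well-defined induced symplectic form, reductions of Lagrangian
subspaces are Lagrangian, and the negative Maslov index is preserved:
`i(L0,L1,L2) = i(L0^V, L1^V, L2^V)`. -/
theorem maslov_symplectic_reduction {E : Type*} [AddCommGroup E] [Module ℝ E]
    [FiniteDimensional ℝ E] (σ : LinearMap.BilinForm ℝ E)
    (halt : ∀ v, σ v v = 0) (hnd : LinearMap.BilinForm.Nondegenerate σ)
    (L0 L1 L2 : Submodule ℝ E)
    (h0 : IsLagrangian σ L0) (h1 : IsLagrangian σ L1) (h2 : IsLagrangian σ L2)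
    (V : Submodule ℝ E) (hV : V ≤ L0 ⊓ L2) :
    ∃ σ' : LinearMap.BilinForm ℝ
        (↥(sympOrth σ V) ⧸ Submodule.comap (sympOrth σ V).subtype V),
      (∀ z, σ' z z = 0) ∧ LinearMap.BilinForm.Nondegenerate σ' ∧
      (∀ x y : ↥(sympOrth σ V),
        σ' ((Submodule.comap (sympOrth σ V).subtype V).mkQ x)
           ((Submodule.comap (sympOrth σ V).subtype V).mkQ y) = σ (x : E) (y : E)) ∧
      (∀ L : Submodule ℝ E, IsLagrangian σ L → IsLagrangian σ' (sympReduce σ V L)) ∧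
      maslovIndex σ L0 L1 L2
        = maslovIndex σ' (sympReduce σ V L0) (sympReduce σ V L1) (sympReduce σ V L2) :=
  maslov_symplectic_reduction_general σ halt hnd h0.le h2.le L1 hV
end

section
/- Let σ be the standard symplectic form on ℝ^{2n} and σ_ℂ(X,Y) = σ(X̄,Y) its sesquilinear extension to ℂ^{2n}. Let L0, L1, L2 be complex Lagrangian subspaces of (ℂ^{2n}, σ_ℂ). Then the Maslov form m on L1 ∩ (L0 + L2), defined by m(l1) = σ_ℂ(l0, l2) for any decomposition l1 = l0 + l2 with lᵢ ∈ Lᵢ, is a Hermitian form: for every l1 ∈ L1 ∩ (L0 + L2) one has conj(m(l1)) = m(l1), i.e. m(l1) is a real number. -/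
open scoped ComplexOrder

noncomputable section

/-- `ℂ^{2n}`, written with coordinates indexed by `Fin n ⊕ Fin n`
(first block = `q`-coordinates, second block = `p`-coordinates). -/
abbrev CV (n : ℕ) := (Fin n ⊕ Fin n) → ℂ

/-- The sesquilinear extension `σ_ℂ(X,Y) = σ(X̄,Y)` of the standard symplectic form
`σ(x,y) = ⟨Jx,y⟩`, `J = [[0,−I],[I,0]]`, to `ℂ^{2n}` (conjugate-linear in the first
argument). -/
def sigmaC (n : ℕ) : CV n →ₛₗ[starRingEnd ℂ] CV n →ₗ[ℂ] ℂ :=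
  LinearMap.mk₂'ₛₗ (starRingEnd ℂ) (RingHom.id ℂ)
    (fun x y => (∑ i : Fin n, (starRingEnd ℂ) (x (Sum.inl i)) * y (Sum.inr i)) -
      ∑ i : Fin n, (starRingEnd ℂ) (x (Sum.inr i)) * y (Sum.inl i))
    (by intro x x' y; simp [add_mul, Finset.sum_add_distrib]; ring)
    (by
      intro c x y
      simp only [Pi.smul_apply, smul_eq_mul, map_mul]
      rw [mul_sub, Finset.mul_sum, Finset.mul_sum]
      congr 1 <;> exact Finset.sum_congr rfl (by intros; ring))
    (by intro x y y'; simp [mul_add, Finset.sum_add_distrib]; ring)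
    (by
      intro c x y
      simp only [Pi.smul_apply, smul_eq_mul, RingHom.id_apply]
      rw [mul_sub, Finset.mul_sum, Finset.mul_sum]
      congr 1 <;> exact Finset.sum_congr rfl (by intros; ring))

/-- The orthogonal of a subspace with respect to a sesquilinear form. -/
def sesqOrth {W : Type*} [AddCommGroup W] [Module ℂ W]
    (f : W →ₛₗ[starRingEnd ℂ] W →ₗ[ℂ] ℂ) (L : Submodule ℂ W) : Submodule ℂ W where
  carrier := {u | ∀ w ∈ L, f u w = 0}
  add_mem' := by
    intro a b ha hb w hw
    simp [map_add, ha w hw, hb w hw]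
  zero_mem' := by
    intro w hw
    simp
  smul_mem' := by
    intro c u hu w hw
    simp [LinearMap.map_smulₛₗ, hu w hw]

/-- A complex subspace is Lagrangian for a sesquilinear form when it coincides with its
orthogonal. -/
def IsLagrangianC {W : Type*} [AddCommGroup W] [Module ℂ W]
    (f : W →ₛₗ[starRingEnd ℂ] W →ₗ[ℂ] ℂ) (L : Submodule ℂ W) : Prop :=
  L = sesqOrth f L

/-- Negative inertia index of the (Hermitian) Maslov form of a triple of complex
Lagrangian subspaces: the supremum of complex dimensions of subspaces of
`L1 ∩ (L0 + L2)` on which `m(l1) = σ_ℂ(l0,l2)` is negative definite (negativity in the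
complex order: real and `< 0`). -/
def maslovIndexC {W : Type*} [AddCommGroup W] [Module ℂ W]
    (f : W →ₛₗ[starRingEnd ℂ] W →ₗ[ℂ] ℂ) (L0 L1 L2 : Submodule ℂ W) : ℕ :=
  sSup {d : ℕ | ∃ S : Submodule ℂ W, S ≤ L1 ⊓ (L0 ⊔ L2) ∧
    (∀ v ∈ S, v ≠ 0 → ∀ l0 ∈ L0, ∀ l2 ∈ L2, v = l0 + l2 → f l0 l2 < 0) ∧
    Module.finrank ℂ ↥S = d}

section PairOfIsotropicVectors

variable {R S M N : Type*} [CommSemiring R] [CommSemiring S] [AddCommMonoid M] [Module R M]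
  [AddCommGroup N] [Module S N] {I₁ I₂ : R →+* S}

theorem neg_apply_swap_of_apply_self_eq_zero {f : M →ₛₗ[I₁] M →ₛₗ[I₂] N} {x y : M}
    (hx : f x x = 0) (hy : f y y = 0) (hxy : f (x + y) (x + y) = 0) : -f y x = f x y := by
  have cross_terms : f y x + f x y = 0 := by
    simpa only [map_add, LinearMap.add_apply, hx, hy, zero_add, add_zero] using hxy
  exact neg_eq_of_add_eq_zero_right cross_terms

end PairOfIsotropicVectors

section SkewHermitian

variable {R W : Type*} [CommRing R] [StarRing R] [AddCommMonoid W] [Module R W]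

/-- A sesquilinear form, conjugate-linear in its first argument, is skew-Hermitian when
exchanging its arguments conjugates and negates its value. It is the property of `sigmaC` that
makes the Maslov form Hermitian. -/
def IsSkewHermitian (f : W →ₛₗ[starRingEnd R] W →ₗ[R] R) : Prop :=
  ∀ x y, starRingEnd R (f x y) = -f y x

theorem maslov_form_is_hermitian_general {f : W →ₛₗ[starRingEnd R] W →ₗ[R] R}
    (hf : IsSkewHermitian f) {L0 L1 L2 : Submodule R W} (h0 : ∀ x ∈ L0, f x x = 0)
    (h1 : ∀ x ∈ L1, f x x = 0) (h2 : ∀ x ∈ L2, f x x = 0) :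
    ∀ l1 ∈ L1, ∀ l0 ∈ L0, ∀ l2 ∈ L2, l1 = l0 + l2 →
      starRingEnd R (f l0 l2) = f l0 l2 := by
  rintro _ hl1 l0 hl0 l2 hl2 rfl
  calc starRingEnd R (f l0 l2) = -f l2 l0 := hf l0 l2
    _ = f l0 l2 := neg_apply_swap_of_apply_self_eq_zero (h0 l0 hl0) (h2 l2 hl2) (h1 _ hl1)

end SkewHermitian

theorem sigmaC_apply {n : ℕ} (x y : CV n) :
    sigmaC n x y = (∑ i, starRingEnd ℂ (x (Sum.inl i)) * y (Sum.inr i)) -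
      ∑ i, starRingEnd ℂ (x (Sum.inr i)) * y (Sum.inl i) :=
  rfl

theorem isSkewHermitian_sigmaC (n : ℕ) : IsSkewHermitian (sigmaC n) := by
  intro x y
  simp only [sigmaC_apply, map_sub, map_sum, map_mul, Complex.conj_conj, neg_sub, mul_comm]

theorem IsLagrangianC.apply_eq_zero {W : Type*} [AddCommGroup W] [Module ℂ W]
    {f : W →ₛₗ[starRingEnd ℂ] W →ₗ[ℂ] ℂ} {L : Submodule ℂ W} (hL : IsLagrangianC f L)
    {x y : W} (hx : x ∈ L) (hy : y ∈ L) : f x y = 0 :=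
  hL.le hx y hy

/-- the Maslov form of a triple of complex Lagrangian subspaces of
`(ℂ^{2n}, σ_ℂ)` is Hermitian: each of its values `m(l1) = σ_ℂ(l0,l2)` is fixed by
complex conjugation, i.e. it is a real number. -/
theorem maslov_form_is_hermitian {n : ℕ} (L0 L1 L2 : Submodule ℂ (CV n))
    (h0 : IsLagrangianC (sigmaC n) L0) (h1 : IsLagrangianC (sigmaC n) L1)
    (h2 : IsLagrangianC (sigmaC n) L2) :
    ∀ l1 ∈ L1, ∀ l0 ∈ L0, ∀ l2 ∈ L2, l1 = l0 + l2 →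
      (starRingEnd ℂ) (sigmaC n l0 l2) = sigmaC n l0 l2 := by
  exact maslov_form_is_hermitian_general (isSkewHermitian_sigmaC n)
    (fun _ hx => h0.apply_eq_zero hx hx) (fun _ hx => h1.apply_eq_zero hx hx)
    (fun _ hx => h2.apply_eq_zero hx hx)

end
end

section
/- On ℂⁿ × ℂⁿ consider the sesquilinear form ω((x1,x2),(y1,y2)) = i⟨x1,y1⟩ − i⟨x2,y2⟩, where ⟨a,b⟩ = Σ āᵢbᵢ is the standard Hermitian inner product (conjugate-linear in the first argument). A complex subspace L ⊆ ℂⁿ × ℂⁿ is Lagrangian for ω (i.e. L equals its ω-orthogonal) if and only if L is the graph {(x, Rx) : x ∈ ℂⁿ} of a unitary operator R : ℂⁿ → ℂⁿ. In particular, the graph of a linear map R is Lagrangian if and only if R is unitary, and every Lagrangian subspace is transversal to both factors ℂⁿ × {0} and {0} × ℂⁿ. -/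
noncomputable section

/-- The standard Hermitian inner product on `ℂⁿ`, conjugate-linear in the first
argument: `⟨a,b⟩ = Σ āᵢ bᵢ`. -/
def hermInner {n : ℕ} (a b : Fin n → ℂ) : ℂ := ∑ i, (starRingEnd ℂ) (a i) * b i

lemma hermInner_add_left {n : ℕ} (a a' b : Fin n → ℂ) :
    hermInner (a + a') b = hermInner a b + hermInner a' b := by
  simp [hermInner, add_mul, Finset.sum_add_distrib]

lemma hermInner_add_right {n : ℕ} (a b b' : Fin n → ℂ) :
    hermInner a (b + b') = hermInner a b + hermInner a b' := by
  simp [hermInner, mul_add, Finset.sum_add_distrib]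

lemma hermInner_smul_left {n : ℕ} (c : ℂ) (a b : Fin n → ℂ) :
    hermInner (c • a) b = (starRingEnd ℂ) c * hermInner a b := by
  simp only [hermInner, Pi.smul_apply, smul_eq_mul, map_mul, Finset.mul_sum]
  exact Finset.sum_congr rfl (by intros; ring)

lemma hermInner_smul_right {n : ℕ} (c : ℂ) (a b : Fin n → ℂ) :
    hermInner a (c • b) = c * hermInner a b := by
  simp only [hermInner, Pi.smul_apply, smul_eq_mul, Finset.mul_sum]
  exact Finset.sum_congr rfl (by intros; ring)

/-- The sesquilinear form `ω((x1,x2),(y1,y2)) = i⟨x1,y1⟩ − i⟨x2,y2⟩` on `ℂⁿ × ℂⁿ`. -/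
def omegaForm (n : ℕ) :
    ((Fin n → ℂ) × (Fin n → ℂ)) →ₛₗ[starRingEnd ℂ] ((Fin n → ℂ) × (Fin n → ℂ)) →ₗ[ℂ] ℂ :=
  LinearMap.mk₂'ₛₗ (starRingEnd ℂ) (RingHom.id ℂ)
    (fun x y => Complex.I * hermInner x.1 y.1 - Complex.I * hermInner x.2 y.2)
    (by intro x x' y; simp [hermInner_add_left]; ring)
    (by intro c x y; simp [hermInner_smul_left, smul_eq_mul]; ring)
    (by intro x y y'; simp [hermInner_add_right]; ring)
    (by intro c x y; simp [hermInner_smul_right, smul_eq_mul]; ring)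

/-!
A Lagrangian `L` is isotropic, so it meets any subspace on which the form is anisotropic only in
`0`; being its own orthogonal, it also has at least half the dimension of the ambient space. Both
factors of `ℂⁿ × ℂⁿ` have half the dimension, and `ω` is definite on each of them, so both are
complements of `L`. Being complementary to the second factor makes `L` the graph of a linear map
`R`, and isotropy of the graph says precisely that `R` preserves the inner product. Conversely, if
`R` preserves the inner product then it is bijective, and a vector `(x, y)` orthogonal to the graph
satisfies `⟨y - R x, R b⟩ = 0` for all `b`; hence `y = R x`.
-/

open Module

section Semilinear

variable {K K' U U' : Type*} [DivisionRing K] [DivisionRing K'] {σ : K →+* K'}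
  [RingHomSurjective σ] [AddCommGroup U] [Module K U] [AddCommGroup U'] [Module K' U']

lemma finrank_le_finrank_of_semilinear_injective [FiniteDimensional K' U'] (g : U →ₛₗ[σ] U')
    (hg : Function.Injective g) : finrank K U ≤ finrank K' U' := by
  have rank_le := lift_rank_le_of_surjective_injective σ g.toAddMonoidHom
    RingHomSurjective.is_surjective hg g.map_smulₛₗ
  simpa only [finrank, Cardinal.toNat_lift] using Cardinal.toNat_le_toNat rank_le
    (Cardinal.lift_lt_aleph0.2 (rank_lt_aleph0 K' U'))

lemma finrank_le_finrank_ker_add_finrank [FiniteDimensional K U] [FiniteDimensional K' U']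
    (g : U →ₛₗ[σ] U') : finrank K U ≤ finrank K (LinearMap.ker g) + finrank K' U' := by
  have quotient_le : finrank K (U ⧸ LinearMap.ker g) ≤ finrank K' U' :=
    finrank_le_finrank_of_semilinear_injective ((LinearMap.ker g).liftQ g le_rfl)
      (LinearMap.ker_eq_bot.1 (Submodule.ker_liftQ_eq_bot' _ g rfl))
  have := (LinearMap.ker g).finrank_quotient_add_finrank
  lia

end Semilinear

section Lagrangian

variable {U : Type*} [AddCommGroup U] [Module ℂ U] {f : U →ₛₗ[starRingEnd ℂ] U →ₗ[ℂ] ℂ}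
  {L N : Submodule ℂ U}

lemma mem_sesqOrth {u : U} : u ∈ sesqOrth f L ↔ ∀ w ∈ L, f u w = 0 := Iff.rfl

lemma sesqOrth_eq_ker_domRestrict₂ : sesqOrth f L = LinearMap.ker (f.domRestrict₂ L) := by
  ext u
  simp [mem_sesqOrth, LinearMap.ext_iff, LinearMap.domRestrict₂_apply]

lemma finrank_le_finrank_sesqOrth_add_finrank [FiniteDimensional ℂ U]
    (f : U →ₛₗ[starRingEnd ℂ] U →ₗ[ℂ] ℂ) (L : Submodule ℂ U) :
    finrank ℂ U ≤ finrank ℂ (sesqOrth f L) + finrank ℂ L := by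
  rw [sesqOrth_eq_ker_domRestrict₂, ← Subspace.dual_finrank_eq (V := L)]
  exact finrank_le_finrank_ker_add_finrank (f.domRestrict₂ L)

lemma sesqOrth_smul {c : ℂ} (hc : c ≠ 0) : sesqOrth (c • f) L = sesqOrth f L := by
  ext u
  simp [mem_sesqOrth, hc]

lemma isLagrangianC_smul_iff {c : ℂ} (hc : c ≠ 0) :
    IsLagrangianC (c • f) L ↔ IsLagrangianC f L := by
  rw [IsLagrangianC, IsLagrangianC, sesqOrth_smul hc]

namespace IsLagrangianC

lemma apply_eq_zero_s5 (hL : IsLagrangianC f L) {u w : U} (hu : u ∈ L) (hw : w ∈ L) : f u w = 0 :=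
  mem_sesqOrth.1 (hL.le hu) w hw

lemma disjoint_of_anisotropic (hL : IsLagrangianC f L) (hN : ∀ u ∈ N, f u u = 0 → u = 0) :
    Disjoint L N :=
  Submodule.disjoint_def.2 fun u huL huN ↦ hN u huN (hL.apply_eq_zero_s5 huL huL)

lemma finrank_le_two_mul [FiniteDimensional ℂ U] (hL : IsLagrangianC f L) :
    finrank ℂ U ≤ 2 * finrank ℂ L := by
  have := finrank_le_finrank_sesqOrth_add_finrank f L
  rw [← hL] at this
  lia

lemma isCompl_of_anisotropic [FiniteDimensional ℂ U] (hL : IsLagrangianC f L)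
    (hN : ∀ u ∈ N, f u u = 0 → u = 0) (hdim : finrank ℂ U ≤ 2 * finrank ℂ N) :
    IsCompl L N := by
  refine (Submodule.isCompl_iff_disjoint L N ?_).2 (hL.disjoint_of_anisotropic hN)
  have := hL.finrank_le_two_mul
  lia

end IsLagrangianC

end Lagrangian

section Graph

variable {A V W : Type*} [Ring A] [AddCommGroup V] [Module A V] [AddCommGroup W] [Module A W]

lemma exists_eq_graph_of_isCompl {L : Submodule A (V × W)}
    (hL : IsCompl L ((⊥ : Submodule A V).prod (⊤ : Submodule A W))) :
    ∃ R : V →ₗ[A] W, L = R.graph := by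
  refine Submodule.exists_eq_graph ⟨fun u v huv ↦ ?_, fun x ↦ ?_⟩
  · have fst_sub : (u - v : V × W).1 = 0 := sub_eq_zero.2 huv
    have sub_eq : (u - v : V × W) = 0 :=
      Submodule.disjoint_def.1 hL.disjoint _ (L.sub_mem u.2 v.2) ⟨fst_sub, trivial⟩
    exact Subtype.ext (sub_eq_zero.1 sub_eq)
  · obtain ⟨u, v, hu, hv, huv⟩ := Submodule.codisjoint_iff_exists_add_eq.1 hL.codisjoint (x, 0)
    have fst_v : v.1 = 0 := hv.1
    exact ⟨⟨u, hu⟩, by simpa [fst_v] using congrArg Prod.fst huv⟩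

end Graph

section DifferenceForm

variable {A V W : Type*} [CommRing A] {σ : A →+* A}
  [AddCommGroup V] [Module A V] [AddCommGroup W] [Module A W]

/-- A sesquilinear form is anisotropic when `0` is its only isotropic vector. The standard
inner product enters the argument only through this property. -/
def IsAnisotropic (B : V →ₛₗ[σ] V →ₗ[A] A) : Prop :=
  ∀ a, B a a = 0 → a = 0

/-- The form `((x₁, x₂), (y₁, y₂)) ↦ B x₁ y₁ - C x₂ y₂` on `V × W`, of which `ω` is, up to the
factor `i`, the case where `B` and `C` are both the standard inner product. -/
def differenceForm (B : V →ₛₗ[σ] V →ₗ[A] A) (C : W →ₛₗ[σ] W →ₗ[A] A) :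
    V × W →ₛₗ[σ] V × W →ₗ[A] A :=
  B.compl₂ (LinearMap.fst A V W) ∘ₛₗ LinearMap.fst A V W -
    C.compl₂ (LinearMap.snd A V W) ∘ₛₗ LinearMap.snd A V W

variable {B : V →ₛₗ[σ] V →ₗ[A] A} {C : W →ₛₗ[σ] W →ₗ[A] A}

lemma differenceForm_apply (u w : V × W) :
    differenceForm B C u w = B u.1 w.1 - C u.2 w.2 := rfl

lemma IsAnisotropic.injective_of_isometry (hB : IsAnisotropic B) {R : V →ₗ[A] W}
    (hR : ∀ a b, C (R a) (R b) = B a b) : Function.Injective R :=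
  (injective_iff_map_eq_zero R).2 fun a ha ↦ hB a (by rw [← hR, ha, map_zero])

lemma IsAnisotropic.differenceForm_top_prod_bot (hB : IsAnisotropic B) :
    ∀ u ∈ (⊤ : Submodule A V).prod (⊥ : Submodule A W), differenceForm B C u u = 0 → u = 0 := by
  rintro ⟨x, y⟩ ⟨-, rfl : y = 0⟩ hu
  exact Prod.ext (hB x (by simpa [differenceForm_apply] using hu)) rfl

lemma IsAnisotropic.differenceForm_bot_prod_top (hC : IsAnisotropic C) :
    ∀ u ∈ (⊥ : Submodule A V).prod (⊤ : Submodule A W), differenceForm B C u u = 0 → u = 0 := by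
  rintro ⟨x, y⟩ ⟨rfl : x = 0, -⟩ hu
  exact Prod.ext rfl (hC y (by simpa [differenceForm_apply] using hu))

end DifferenceForm

section LagrangianGraph

variable {V W : Type*} [AddCommGroup V] [Module ℂ V] [AddCommGroup W] [Module ℂ W]
  {B : V →ₛₗ[starRingEnd ℂ] V →ₗ[ℂ] ℂ} {C : W →ₛₗ[starRingEnd ℂ] W →ₗ[ℂ] ℂ}

lemma mem_sesqOrth_differenceForm_graph {R : V →ₗ[ℂ] W} {u : V × W} :
    u ∈ sesqOrth (differenceForm B C) R.graph ↔ ∀ b, C u.2 (R b) = B u.1 b := by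
  simp [mem_sesqOrth, differenceForm_apply, sub_eq_zero, eq_comm (a := B _ _)]

lemma isometry_of_isLagrangianC_graph {R : V →ₗ[ℂ] W}
    (hR : IsLagrangianC (differenceForm B C) R.graph) (a b : V) : C (R a) (R b) = B a b :=
  mem_sesqOrth_differenceForm_graph.1 (hR.le (show (a, R a) ∈ R.graph from rfl)) b

lemma isLagrangianC_graph_of_surjective_isometry (hB : IsAnisotropic B) {R : V →ₗ[ℂ] W}
    (hsurj : Function.Surjective R) (hR : ∀ a b, C (R a) (R b) = B a b) :
    IsLagrangianC (differenceForm B C) R.graph := by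
  ext ⟨x, y⟩
  rw [LinearMap.mem_graph_iff, mem_sesqOrth_differenceForm_graph]
  constructor
  · rintro (rfl : y = R x)
    exact hR x
  · intro horth
    obtain ⟨b, hb⟩ := hsurj (y - R x)
    have b_isotropic : B b b = 0 :=
      calc B b b = C (y - R x) (R b) := by rw [← hR, hb]
        _ = B x b - B x b := by rw [map_sub, LinearMap.sub_apply, horth, hR]
        _ = 0 := sub_self _
    rw [hB b b_isotropic, map_zero] at hb
    exact sub_eq_zero.1 hb.symm

variable [FiniteDimensional ℂ V] [FiniteDimensional ℂ W]

lemma isLagrangianC_graph_iff_isometry (hB : IsAnisotropic B) (hdim : finrank ℂ V = finrank ℂ W)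
    (R : V →ₗ[ℂ] W) :
    IsLagrangianC (differenceForm B C) R.graph ↔ ∀ a b, C (R a) (R b) = B a b := by
  refine ⟨isometry_of_isLagrangianC_graph, fun hR ↦ ?_⟩
  have hsurj : Function.Surjective R :=
    (LinearMap.injective_iff_surjective_of_finrank_eq_finrank hdim).1 (hB.injective_of_isometry hR)
  exact isLagrangianC_graph_of_surjective_isometry hB hsurj hR

lemma IsLagrangianC.isCompl_top_prod_bot (hB : IsAnisotropic B)
    (hdim : finrank ℂ W ≤ finrank ℂ V) {L : Submodule ℂ (V × W)}
    (hL : IsLagrangianC (differenceForm B C) L) :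
    IsCompl L ((⊤ : Submodule ℂ V).prod (⊥ : Submodule ℂ W)) := by
  refine hL.isCompl_of_anisotropic hB.differenceForm_top_prod_bot ?_
  rw [← Submodule.map_inl, Submodule.map_top,
    LinearMap.finrank_range_of_inj LinearMap.inl_injective, finrank_prod]
  lia

lemma IsLagrangianC.isCompl_bot_prod_top (hC : IsAnisotropic C)
    (hdim : finrank ℂ V ≤ finrank ℂ W) {L : Submodule ℂ (V × W)}
    (hL : IsLagrangianC (differenceForm B C) L) :
    IsCompl L ((⊥ : Submodule ℂ V).prod (⊤ : Submodule ℂ W)) := by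
  refine hL.isCompl_of_anisotropic hC.differenceForm_bot_prod_top ?_
  rw [← Submodule.map_inr, Submodule.map_top,
    LinearMap.finrank_range_of_inj LinearMap.inr_injective, finrank_prod]
  lia

theorem lagrangian_iff_graph_of_unitary_general (hB : IsAnisotropic B) (hC : IsAnisotropic C)
    (hdim : finrank ℂ V = finrank ℂ W) :
    (∀ L : Submodule ℂ (V × W), IsLagrangianC (differenceForm B C) L ↔
      ∃ R : V →ₗ[ℂ] W, (∀ a b, C (R a) (R b) = B a b) ∧ L = R.graph) ∧
    (∀ R : V →ₗ[ℂ] W,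
      IsLagrangianC (differenceForm B C) R.graph ↔ ∀ a b, C (R a) (R b) = B a b) ∧
    (∀ L : Submodule ℂ (V × W), IsLagrangianC (differenceForm B C) L →
      IsCompl L ((⊤ : Submodule ℂ V).prod (⊥ : Submodule ℂ W)) ∧
      IsCompl L ((⊥ : Submodule ℂ V).prod (⊤ : Submodule ℂ W))) := by
  have graph_iff := isLagrangianC_graph_iff_isometry (C := C) hB hdim
  refine ⟨fun L ↦ ⟨fun hL ↦ ?_, ?_⟩, graph_iff, fun L hL ↦
    ⟨hL.isCompl_top_prod_bot hB hdim.ge, hL.isCompl_bot_prod_top hC hdim.le⟩⟩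
  · obtain ⟨R, rfl⟩ := exists_eq_graph_of_isCompl (hL.isCompl_bot_prod_top hC hdim.le)
    exact ⟨R, (graph_iff R).1 hL, rfl⟩
  · rintro ⟨R, hR, rfl⟩
    exact (graph_iff R).2 hR

end LagrangianGraph

section HermitianForm

variable {n : ℕ}

/-- `hermInner` bundled as a sesquilinear form. -/
def hermForm (n : ℕ) : (Fin n → ℂ) →ₛₗ[starRingEnd ℂ] (Fin n → ℂ) →ₗ[ℂ] ℂ :=
  LinearMap.mk₂'ₛₗ (starRingEnd ℂ) (RingHom.id ℂ) hermInner
    hermInner_add_left hermInner_smul_left hermInner_add_right hermInner_smul_right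

open scoped ComplexOrder in
lemma isAnisotropic_hermForm : IsAnisotropic (hermForm n) :=
  fun _ ha ↦ dotProduct_star_self_eq_zero.1 ha

lemma omegaForm_eq_smul_differenceForm :
    omegaForm n = Complex.I • differenceForm (hermForm n) (hermForm n) :=
  LinearMap.ext₂ fun _ _ ↦ (mul_sub _ _ _).symm

end HermitianForm

/-- a complex subspace of `ℂⁿ × ℂⁿ` is Lagrangian for
`ω((x1,x2),(y1,y2)) = i⟨x1,y1⟩ − i⟨x2,y2⟩` iff it is the graph of a unitary operator;
in particular the graph of a linear map is Lagrangian iff the map is unitary, and every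
Lagrangian subspace is transversal to both factors `ℂⁿ × {0}` and `{0} × ℂⁿ`. -/
theorem lagrangian_iff_graph_of_unitary (n : ℕ) :
    (∀ L : Submodule ℂ ((Fin n → ℂ) × (Fin n → ℂ)),
      IsLagrangianC (omegaForm n) L ↔
        ∃ R : (Fin n → ℂ) →ₗ[ℂ] (Fin n → ℂ),
          (∀ a b, hermInner (R a) (R b) = hermInner a b) ∧ L = LinearMap.graph R) ∧
    (∀ R : (Fin n → ℂ) →ₗ[ℂ] (Fin n → ℂ),
      IsLagrangianC (omegaForm n) (LinearMap.graph R) ↔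
        ∀ a b, hermInner (R a) (R b) = hermInner a b) ∧
    (∀ L : Submodule ℂ ((Fin n → ℂ) × (Fin n → ℂ)), IsLagrangianC (omegaForm n) L →
      IsCompl L ((⊤ : Submodule ℂ (Fin n → ℂ)).prod (⊥ : Submodule ℂ (Fin n → ℂ))) ∧
      IsCompl L ((⊥ : Submodule ℂ (Fin n → ℂ)).prod (⊤ : Submodule ℂ (Fin n → ℂ)))) := by
  simp only [omegaForm_eq_smul_differenceForm, isLagrangianC_smul_iff Complex.I_ne_zero]
  exact lagrangian_iff_graph_of_unitary_general isAnisotropic_hermForm isAnisotropic_hermForm rfl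

end
end
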